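/- Let (Γ, M) be a boundary pair with M connected and not homeomorphic to the circle S¹, and let ρ : Γ → SL₄(ℝ) be a relatively 1-Anosov representation with respect to (Γ, M). Then the stabilizer of every bounded parabolic point of M is virtually free abelian of rank at most 2: it has a finite-index subgroup isomorphic to ℤ or to ℤ × ℤ. -/

import Mathlib

open Filter Topology Matrix

noncomputable instance projectivizationTopology
    {K V : Type*} [DivisionRing K] [AddCommGroup V] [Module K V] [TopologicalSpace V] :
    TopologicalSpace (Projectivization K V) :=
  inferInstanceAs (TopologicalSpace (Quotient _))

/-- `g n • z → a` locally uniformly on `M ∖ {b}`. -/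
def ConvLocUnif {Γ M : Type} [SMul Γ M] [TopologicalSpace M]
    (g : ℕ → Γ) (a b : M) : Prop :=
  ∀ K : Set M, IsCompact K → b ∉ K →
    ∀ U ∈ 𝓝 a, ∀ᶠ n in atTop, ∀ z ∈ K, g n • z ∈ U

/-- The action of `Γ` on `M` is an action by homeomorphisms with the convergence property. -/
def IsConvergenceAction (Γ M : Type) [Group Γ] [TopologicalSpace M] [MulAction Γ M] : Prop :=
  (∀ γ : Γ, Continuous fun x : M => γ • x) ∧
  ∀ g : ℕ → Γ, Function.Injective g →
    ∃ φ : ℕ → ℕ, StrictMono φ ∧ ∃ a b : M, ConvLocUnif (fun n => g (φ n)) a b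

def IsConicalLimitPoint (Γ : Type) {M : Type} [Group Γ] [TopologicalSpace M]
    [MulAction Γ M] (x : M) : Prop :=
  ∃ a b : M, a ≠ b ∧ ∃ g : ℕ → Γ,
    Tendsto (fun n => g n • x) atTop (𝓝 a) ∧
    ∀ y : M, y ≠ x → Tendsto (fun n => g n • y) atTop (𝓝 b)

def IsBoundedParabolicPoint (Γ : Type) {M : Type} [Group Γ] [TopologicalSpace M]
    [MulAction Γ M] (x : M) : Prop :=
  Infinite (MulAction.stabilizer Γ x) ∧
  (∀ y : M, (∀ γ ∈ MulAction.stabilizer Γ x, γ • y = y) → y = x) ∧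
  (∃ K : Set M, IsCompact K ∧ x ∉ K ∧
    ∀ y : M, y ≠ x → ∃ γ ∈ MulAction.stabilizer Γ x, γ • y ∈ K)

/-- `(Γ, M)` is a boundary pair: `Γ` is a finitely generated group acting as a geometrically
finite convergence group on the perfect compact metrizable space `M`. -/
structure IsBoundaryPair (Γ M : Type) [Group Γ] [TopologicalSpace M] [MulAction Γ M] : Prop where
  fg : Group.FG Γ
  compact : CompactSpace M
  metrizable : TopologicalSpace.MetrizableSpace M
  perfect : ∀ x : M, Filter.NeBot (𝓝[≠] x)
  conv : IsConvergenceAction Γ M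
  gf : ∀ x : M, IsConicalLimitPoint Γ x ∨
    (IsBoundedParabolicPoint Γ x ∧ Group.FG (MulAction.stabilizer Γ x))

/-- A relatively 1-Anosov representation into `SL_d(ℝ)`, recorded through its limit maps
`ξ : M → ℙ(ℝ^d)` and `ξs : M → ℙ((ℝ^d)*)`, where a functional is recorded by the vector
pairing with it under the dot product. -/
structure IsRelOneAnosov {Γ M : Type} [Group Γ] [TopologicalSpace M] [MulAction Γ M] {d : ℕ}
    (ρ : Γ →* Matrix.SpecialLinearGroup (Fin d) ℝ)
    (ξ : M → Projectivization ℝ (Fin d → ℝ))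
    (ξs : M → Projectivization ℝ (Fin d → ℝ)) : Prop where
  continuous_fst : Continuous ξ
  continuous_snd : Continuous ξs
  equivariant_fst : ∀ (γ : Γ) (x : M) (v : Fin d → ℝ) (hv : v ≠ 0)
      (hgv : (ρ γ : Matrix (Fin d) (Fin d) ℝ) *ᵥ v ≠ 0),
      ξ x = Projectivization.mk ℝ v hv →
      ξ (γ • x) = Projectivization.mk ℝ ((ρ γ : Matrix (Fin d) (Fin d) ℝ) *ᵥ v) hgv
  equivariant_snd : ∀ (γ : Γ) (x : M) (φ : Fin d → ℝ) (hφ : φ ≠ 0)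
      (hgφ : φ ᵥ* (((ρ γ)⁻¹ : Matrix.SpecialLinearGroup (Fin d) ℝ) : Matrix (Fin d) (Fin d) ℝ) ≠ 0),
      ξs x = Projectivization.mk ℝ φ hφ →
      ξs (γ • x) = Projectivization.mk ℝ
        (φ ᵥ* (((ρ γ)⁻¹ : Matrix.SpecialLinearGroup (Fin d) ℝ) : Matrix (Fin d) (Fin d) ℝ)) hgφ
  transverse : ∀ (x y : M), x ≠ y → ∀ (v φ : Fin d → ℝ) (hv : v ≠ 0) (hφ : φ ≠ 0),
      ξ x = Projectivization.mk ℝ v hv → ξs y = Projectivization.mk ℝ φ hφ → φ ⬝ᵥ v ≠ 0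
  dynamics : ∀ (g : ℕ → Γ) (x y : M),
      (∀ z : M, z ≠ y → Tendsto (fun n => g n • z) atTop (𝓝 x)) →
      (∀ z : M, z ≠ x → Tendsto (fun n => (g n)⁻¹ • z) atTop (𝓝 y)) →
      ∀ (φ : Fin d → ℝ) (hφ : φ ≠ 0), ξs y = Projectivization.mk ℝ φ hφ →
      ∀ (u : Fin d → ℝ) (hu : ∀ n, (ρ (g n) : Matrix (Fin d) (Fin d) ℝ) *ᵥ u ≠ 0),
        φ ⬝ᵥ u ≠ 0 →
        Tendsto (fun n => Projectivization.mk ℝ ((ρ (g n) : Matrix (Fin d) (Fin d) ℝ) *ᵥ u) (hu n))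
          atTop (𝓝 (ξ x))

/-- The unit circle `S¹`. -/
abbrev Circle1 : Type := Metric.sphere (0 : EuclideanSpace ℝ (Fin 2)) 1

/-! In normalized form, the matrices of the elements of a parabolic stabilizer converge to the
rank-one matrix `v ⊗ φ`, where `v` spans `ξ x` and `φ` spans `ξs x`, and `φ` vanishes on `v`. In a
basis in which `v = e₀` and `φ` is the last coordinate, the corner entry therefore dominates all the
others. This forces the diagonal entries at the two ends to be `±1`, so that, up to finite index,
the middle `2 × 2` block together with the last column is an area-preserving affine action on the
plane.

Left and right translations change the sign of the corner entry only finitely often. Hence, if some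
element has infinite order, either the group is virtually `ℤ` or that sign is constant outside a
finite set. In the second case the affine action is proper, and a group acting properly by
area-preserving affine maps on the plane is virtually free abelian of rank at most two. If every
element has finite order, the affine action has a fixed point up to finite index, and the first
coordinate along the orbit of a vector above that point is then a proper homomorphism to `ℝ`. -/

section GroupTheory

variable {G H : Type*} [Group G] [Group H]

/-- `G` is virtually free abelian of rank at most `n`. -/
def VirtuallyFreeAbelian (n : ℕ) (G : Type*) [Group G] : Prop :=
  ∃ k ≤ n, ∃ H : Subgroup G, H.FiniteIndex ∧ Nonempty (H ≃* Multiplicative (Fin k → ℤ))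

lemma VirtuallyFreeAbelian.mono {m n : ℕ} (hmn : m ≤ n) (h : VirtuallyFreeAbelian m G) :
    VirtuallyFreeAbelian n G :=
  let ⟨k, hk, hH⟩ := h
  ⟨k, hk.trans hmn, hH⟩

lemma VirtuallyFreeAbelian.of_subgroup {n : ℕ} (K : Subgroup G) [K.FiniteIndex]
    (h : VirtuallyFreeAbelian n K) : VirtuallyFreeAbelian n G := by
  obtain ⟨k, hk, H, hH, ⟨e⟩⟩ := h
  refine ⟨k, hk, H.map K.subtype, ?_,
    ⟨(H.equivMapOfInjective K.subtype K.subtype_injective).symm.trans e⟩⟩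
  rw [Subgroup.finiteIndex_iff, Subgroup.index_map_subtype]
  exact mul_ne_zero hH.index_ne_zero Subgroup.FiniteIndex.index_ne_zero

lemma finiteIndex_of_finite_cover {K : Subgroup G} {S : Set G} (hS : S.Finite)
    (hK : ∀ g, ∃ s ∈ S, s⁻¹ * g ∈ K) : K.FiniteIndex := by
  have := hS.to_subtype
  rw [Subgroup.finiteIndex_iff_finite_quotient]
  refine Finite.of_surjective (fun s : S => (QuotientGroup.mk (s : G) : G ⧸ K)) fun q => ?_
  obtain ⟨g, rfl⟩ := QuotientGroup.mk_surjective q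
  obtain ⟨s, hs, hsg⟩ := hK g
  exact ⟨⟨s, hs⟩, QuotientGroup.eq.2 hsg⟩

lemma infinite_subgroup_of_finiteIndex [Infinite G] (K : Subgroup G) [K.FiniteIndex] :
    Infinite K := by
  by_contra hK
  have := not_infinite_iff_finite.1 hK
  exact not_finite_iff_infinite.2 ‹Infinite G› (Finite.of_subgroup_quotient K)

lemma finiteIndex_ker_of_finite_range {M : Type*} [Monoid M] (f : G →* M)
    (hf : (Set.range f).Finite) : f.ker.FiniteIndex := by
  have : Finite f.toHomUnits.range :=
    Set.Finite.to_subtype (Set.Finite.of_finite_image (hf.subset (by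
      rintro _ ⟨_, ⟨g, rfl⟩, rfl⟩; exact ⟨g, rfl⟩)) Units.val_injective.injOn (f := Units.val))
  have hker : f.ker = f.toHomUnits.ker := by
    ext g
    simp [MonoidHom.mem_ker]
  rw [hker]
  infer_instance

lemma virtuallyFreeAbelian_one_of_zpow {h : G} (hh : ¬IsOfFinOrder h) {S : Set G} (hS : S.Finite)
    (hcover : ∀ g, ∃ s ∈ S, ∃ k : ℤ, g = s * h ^ k) : VirtuallyFreeAbelian 1 G := by
  have hfi : (Subgroup.zpowers h).FiniteIndex := finiteIndex_of_finite_cover hS fun g => by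
    obtain ⟨s, hs, k, rfl⟩ := hcover g
    exact ⟨s, hs, k, by group⟩
  have e : Subgroup.zpowers h ≃* Multiplicative ℤ := (MonoidHom.ofInjective (f := zpowersHom G h)
    ((injective_zpow_iff_not_isOfFinOrder.2 hh).comp Multiplicative.toAdd.injective)).symm
  exact ⟨1, le_rfl, _, hfi, ⟨e.trans
    (AddEquiv.toMultiplicative (LinearEquiv.funUnique (Fin 1) ℤ ℤ).symm.toAddEquiv)⟩⟩

lemma group_fg_of_surjective_of_finite_ker {f : G →* H} (hf : Function.Surjective f) [Group.FG H]
    [Finite f.ker] : Group.FG G := by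
  obtain ⟨S, hS, hSfin⟩ := (Group.fg_iff (G := H)).1 ‹_›
  refine Group.fg_iff.2 ⟨f.ker ∪ Function.surjInv hf '' S, ?_,
    (Set.toFinite _).union (hSfin.image _)⟩
  set K := Subgroup.closure (f.ker ∪ Function.surjInv hf '' S)
  have hker : f.ker ≤ K := fun g hg => Subgroup.subset_closure (Or.inl hg)
  have hmap : K.map f = ⊤ := top_le_iff.1 <| by
    rw [← hS, Subgroup.closure_le]
    exact fun s hs => ⟨_, Subgroup.subset_closure (Or.inr ⟨s, hs, rfl⟩), Function.surjInv_eq hf s⟩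
  rw [← Subgroup.comap_map_eq_self hker, hmap, Subgroup.comap_top]

end GroupTheory

section ProperHom

variable {E : Type*} [NormedAddCommGroup E]

lemma discreteTopology_of_finite_norm_le {L : AddSubgroup E}
    (hL : ∀ D : ℝ, {x : L | ‖x‖ ≤ D}.Finite) : DiscreteTopology L := by
  refine discreteTopology_of_isOpen_singleton_zero
    (isOpen_singleton_of_finite_mem_nhds 0 (s := {x : L | ‖x‖ ≤ 1}) ?_ (hL 1))
  filter_upwards [Metric.closedBall_mem_nhds (0 : L) one_pos] with x hx
  simpa using hx

lemma discreteTopology_range_of_proper {A : Type*} [AddGroup A] (l : A →+ E)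
    (hl : ∀ D : ℝ, {a | ‖l a‖ ≤ D}.Finite) : DiscreteTopology l.range :=
  discreteTopology_of_finite_norm_le fun D => Set.Finite.of_finite_image
    (((hl D).image l).subset (by rintro _ ⟨⟨_, a, rfl⟩, ha, rfl⟩; exact ⟨a, ha, rfl⟩))
    Subtype.val_injective.injOn

variable [NormedSpace ℝ E] [FiniteDimensional ℝ E]

lemma finrank_int_le_finrank_real (L : Submodule ℤ E) [DiscreteTopology L] :
    Module.finrank ℤ L ≤ Module.finrank ℝ E := by
  have hL : DiscreteTopology (Submodule.span ℤ (L : Set E)) := by rwa [Submodule.span_eq]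
  have hrank := Real.finrank_eq_int_finrank_of_discrete hL
  rw [Set.finrank, Set.finrank, Submodule.span_eq] at hrank
  exact hrank ▸ Submodule.finrank_le _

open scoped IsMulCommutative in
lemma virtuallyFreeAbelian_of_proper_of_comm {A : Type*} [Group A] [IsMulCommutative A]
    (l : A →* Multiplicative E)
    (hl : ∀ D : ℝ, {a | ‖(l a).toAdd‖ ≤ D}.Finite) :
    VirtuallyFreeAbelian (Module.finrank ℝ E) A := by
  let f : Additive A →ₗ[ℤ] E := (MonoidHom.toAdditiveLeft l).toIntLinearMap
  have : DiscreteTopology f.range :=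
    discreteTopology_range_of_proper (MonoidHom.toAdditiveLeft l) hl
  obtain ⟨σ, hσ⟩ := Module.projective_lifting_property f.rangeRestrict LinearMap.id
    f.surjective_rangeRestrict
  have hσ' (x) : l (σ x).toMul = .ofAdd (x : E) := congrArg Subtype.val (LinearMap.congr_fun hσ x)
  let τ : Multiplicative (Fin (Module.finrank ℤ f.range) → ℤ) →* A :=
    AddMonoidHom.toMultiplicativeLeft
      (σ ∘ₗ (Module.finBasis ℤ f.range).equivFun.symm.toLinearMap).toAddMonoidHom
  have hτ : Function.Injective τ :=
    (Function.LeftInverse.injective (g := f.rangeRestrict) (LinearMap.congr_fun hσ)).comp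
      (Module.finBasis ℤ f.range).equivFun.symm.injective
  refine ⟨_, finrank_int_le_finrank_real f.range, τ.range,
    finiteIndex_of_finite_cover (hl 0) fun a => ?_, ⟨(MonoidHom.ofInjective hτ).symm⟩⟩
  refine ⟨a * (σ (f.rangeRestrict (.ofMul a))).toMul⁻¹, ?_,
    .ofAdd ((Module.finBasis ℤ f.range).equivFun (f.rangeRestrict (.ofMul a))), ?_⟩
  · simp only [Set.mem_ofPred_eq, map_mul, map_inv, hσ']
    exact norm_le_zero_iff.2 (add_neg_cancel (f (.ofMul a)))
  · simp [τ]

lemma virtuallyFreeAbelian_of_proper {G : Type*} [Group G] (l : G →* Multiplicative E)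
    (hl : ∀ D : ℝ, {g | ‖(l g).toAdd‖ ≤ D}.Finite) :
    VirtuallyFreeAbelian (Module.finrank ℝ E) G := by
  let L := (MonoidHom.toAdditiveLeft l).range
  have : DiscreteTopology L.toIntSubmodule :=
    discreteTopology_range_of_proper (MonoidHom.toAdditiveLeft l) hl
  have : AddGroup.FG L := Module.Finite.iff_addGroup_fg.1
    (inferInstanceAs (Module.Finite ℤ L.toIntSubmodule))
  let f : G →* Multiplicative L :=
    AddMonoidHom.toMultiplicativeRight (MonoidHom.toAdditiveLeft l).rangeRestrict
  have hker : (f.ker : Set G).Finite := (hl 0).subset fun g hg => by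
    have : l g = 1 := congrArg (fun x => (x.toAdd : E)) (MonoidHom.mem_ker.1 hg)
    simp [this]
  have : Finite f.ker := hker
  have : Group.FG G := group_fg_of_surjective_of_finite_ker (f := f)
    (MonoidHom.toAdditiveLeft l).rangeRestrict_surjective
  have : Finite (commutatorSet G) := (hker.subset (by
    rintro _ ⟨g, h, rfl⟩
    simp [MonoidHom.mem_ker, commutatorElement_def])).to_subtype
  have := Subgroup.finiteIndex_center (G := G)
  have hcenter := virtuallyFreeAbelian_of_proper_of_comm (A := Subgroup.center G)
    (l.comp (Subgroup.center G).subtype) fun D => (hl D).preimage Subtype.val_injective.injOn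
  exact hcenter.of_subgroup

end ProperHom

section AlmostInvariant

variable {G : Type*} [Group G] {A : Set G} {h : G}

lemma mul_zpow_mem_iff {y : G} (hy : ∀ j : ℤ, y * h ^ j * h ∈ A ↔ y * h ^ j ∈ A) (k : ℤ) :
    y * h ^ k ∈ A ↔ y ∈ A := by
  have hper : Function.Periodic (fun j : ℤ => y * h ^ j ∈ A) 1 := fun j =>
    propext (by simpa only [_root_.zpow_add_one, ← mul_assoc] using hy j)
  have hk := hper.int_mul_eq k
  simpa only [mul_one, zpow_zero, eq_iff_iff, Int.cast_id] using hk

lemma finite_compl_of_eventually_zpow_mem (hfin : {y | ¬(y * h ∈ A ↔ y ∈ A)}.Finite)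
    (hpow : ∀ y, {k : ℤ | y * h ^ k ∉ A}.Finite) : Aᶜ.Finite := by
  refine (hfin.biUnion fun f _ => (hpow f).image (f * h ^ ·)).subset fun y hy => ?_
  obtain ⟨k, hk⟩ := (Set.Infinite.nonempty (s := {k : ℤ | y * h ^ k ∈ A}) (by
    simpa [Set.compl_ofPred] using (hpow y).infinite_compl))
  obtain ⟨j, hj⟩ : ∃ j : ℤ, ¬(y * h ^ j * h ∈ A ↔ y * h ^ j ∈ A) := by
    by_contra! hcross
    exact hy ((mul_zpow_mem_iff hcross k).1 hk)
  exact Set.mem_biUnion hj ⟨-j, by simpa [mul_assoc] using hy, by group⟩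

lemma virtuallyFreeAbelian_or_finite_or_finite_compl (hh : ¬IsOfFinOrder h)
    (hright : {y | ¬(y * h ∈ A ↔ y ∈ A)}.Finite) (hleft : ∀ g, {y | ¬(g * y ∈ A ↔ y ∈ A)}.Finite) :
    VirtuallyFreeAbelian 1 G ∨ A.Finite ∨ Aᶜ.Finite := by
  set F := {y | ¬(y * h ∈ A ↔ y ∈ A)}
  by_cases hcover : ∀ g, ∃ s ∈ F, ∃ k : ℤ, g = s * h ^ k
  · exact .inl (virtuallyFreeAbelian_one_of_zpow hh hright hcover)
  push Not at hcover
  obtain ⟨x, hx⟩ := hcover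
  have hinj : Function.Injective fun k : ℤ => x * h ^ k :=
    (mul_right_injective x).comp (injective_zpow_iff_not_isOfFinOrder.2 hh)
  have hnocross (j : ℤ) : x * h ^ j * h ∈ A ↔ x * h ^ j ∈ A := by
    by_contra hj
    exact hx _ hj (-j) (by group)
  have hside (y : G) : {k : ℤ | ¬(y * h ^ k ∈ A ↔ x ∈ A)}.Finite := by
    refine ((hleft (y * x⁻¹)).preimage hinj.injOn).subset fun k hk => ?_
    have hxk := mul_zpow_mem_iff hnocross k
    simpa [mul_assoc, hxk] using hk
  right
  by_cases hxA : x ∈ A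
  · exact .inr (finite_compl_of_eventually_zpow_mem hright (by simpa [hxA] using hside))
  · left
    simpa using finite_compl_of_eventually_zpow_mem (A := Aᶜ) (by simpa [not_iff_not] using hright)
      (by simpa [hxA] using hside)

end AlmostInvariant

section CornerDominated

variable {G ι : Type*} [Group G] [Fintype ι] [DecidableEq ι] {p q : ι} {m : G →* Matrix ι ι ℝ}

/-- A matrix representation `m` whose values stabilize the line `ℝ eₚ` and the hyperplane `x_q = 0`,
and whose `(p, q)` entry tends to infinity along `G` and dominates all the other entries. -/
structure IsCornerDominated (p q : ι) (m : G →* Matrix ι ι ℝ) : Prop where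
  col_eq_zero : ∀ g i, i ≠ p → m g i p = 0
  row_eq_zero : ∀ g j, j ≠ q → m g q j = 0
  tendsto_inv_smul : Tendsto (fun g => (m g p q)⁻¹ • m g) cofinite (𝓝 (Matrix.single p q 1))
  tendsto_abs_corner : Tendsto (fun g => |m g p q|) cofinite atTop

lemma one_le_abs_of_tendsto_div {f : ℕ → ℝ} (hf : Tendsto (fun n => |f n|) atTop atTop) {r : ℝ}
    (hr : Tendsto (fun n => f (n + 1) / f n) atTop (𝓝 r)) : 1 ≤ |r| := by
  by_contra! hlt
  have hf0 : ∀ᶠ n in atTop, f n ≠ 0 :=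
    (hf.eventually_gt_atTop 0).mono fun n hn => abs_pos.1 hn
  have hsum := summable_of_ratio_test_tendsto_lt_one hlt hf0
    (by simpa only [Real.norm_eq_abs, abs_div] using hr.abs)
  exact not_tendsto_nhds_of_tendsto_atTop hf 0 (by simpa using hsum.tendsto_atTop_zero.abs)

lemma abs_eq_one_of_one_le_abs (χ : G →* ℝ) (hχ : ∀ g, ¬IsOfFinOrder g → 1 ≤ |χ g|) (g : G) :
    |χ g| = 1 := by
  by_cases hg : IsOfFinOrder g
  · obtain ⟨n, hn, hgn⟩ := isOfFinOrder_iff_pow_eq_one.1 hg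
    refine (pow_eq_one_iff_of_nonneg (abs_nonneg _) hn.ne').1 ?_
    rw [← abs_pow, ← map_pow, hgn, map_one, abs_one]
  · have hinv := hχ g⁻¹ (by rwa [isOfFinOrder_inv_iff])
    have hmul : |χ g| * |χ g⁻¹| = 1 := by
      rw [← abs_mul, ← map_mul, mul_inv_cancel, map_one, abs_one]
    nlinarith [hχ g hg]

lemma finite_le_of_tendsto_atTop {α : Type*} {f : α → ℝ} (hf : Tendsto f cofinite atTop) (D : ℝ) :
    {a | f a ≤ D}.Finite := by
  simpa using eventually_cofinite.1 (hf.eventually_gt_atTop D)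

lemma mulVec_apply_eq_add_sum_compl {A : Matrix ι ι ℝ} (hA : A p p = 1) (v : ι → ℝ) :
    (A *ᵥ v) p = v p + ∑ i ∈ {p}ᶜ, A p i * v i :=
  (Fintype.sum_eq_add_sum_compl p fun i => A p i * v i).trans (by rw [hA, one_mul])

namespace IsCornerDominated

lemma restrict (hm : IsCornerDominated p q m) (K : Subgroup G) :
    IsCornerDominated p q (m.comp K.subtype) where
  col_eq_zero g := hm.col_eq_zero g
  row_eq_zero g := hm.row_eq_zero g
  tendsto_inv_smul := hm.tendsto_inv_smul.comp Subtype.val_injective.tendsto_cofinite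
  tendsto_abs_corner := hm.tendsto_abs_corner.comp Subtype.val_injective.tendsto_cofinite

/-- The character through which `m` acts on the invariant line `ℝ eₚ`. -/
def colCharacter (hm : IsCornerDominated p q m) : G →* ℝ where
  toFun g := m g p p
  map_one' := by simp
  map_mul' g h := by
    rw [map_mul, Matrix.mul_apply]
    exact Fintype.sum_eq_single p fun i hi => by rw [hm.col_eq_zero h i hi, mul_zero]

/-- The character through which `m` acts on the quotient by the invariant hyperplane `x_q = 0`. -/
def rowCharacter (hm : IsCornerDominated p q m) : G →* ℝ where
  toFun g := m g q q
  map_one' := by simp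
  map_mul' g h := by
    rw [map_mul, Matrix.mul_apply]
    exact Fintype.sum_eq_single q fun i hi => by rw [hm.row_eq_zero g i hi, zero_mul]

lemma tendsto_corner_mul_left (hm : IsCornerDominated p q m) (h : G) :
    Tendsto (fun g => m (h * g) p q / m g p q) cofinite (𝓝 (m h p p)) := by
  have hlim := (tendsto_const_nhds (x := m h)).mul hm.tendsto_inv_smul
  have hlim := ((continuous_id.matrix_elem p q).tendsto _).comp hlim
  simpa [Function.comp_def, div_eq_inv_mul] using hlim

lemma tendsto_corner_mul_right (hm : IsCornerDominated p q m) (h : G) :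
    Tendsto (fun g => m (g * h) p q / m g p q) cofinite (𝓝 (m h q q)) := by
  have hlim := hm.tendsto_inv_smul.mul (tendsto_const_nhds (x := m h))
  have hlim := ((continuous_id.matrix_elem p q).tendsto _).comp hlim
  simpa [Function.comp_def, div_eq_inv_mul] using hlim

lemma tendsto_inv_mul_apply (hm : IsCornerDominated p q m) (i j : ι) :
    Tendsto (fun g => (m g p q)⁻¹ * m g i j) cofinite (𝓝 (Matrix.single p q 1 i j)) :=
  ((continuous_id.matrix_elem i j).tendsto _).comp hm.tendsto_inv_smul

lemma tendsto_inv_mul_mulVec (hm : IsCornerDominated p q m) (w : ι → ℝ) :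
    Tendsto (fun g => (m g p q)⁻¹ * (m g *ᵥ w) p) cofinite (𝓝 (w q)) := by
  have hlim := tendsto_finsetSum Finset.univ fun j _ =>
    (hm.tendsto_inv_mul_apply p j).mul_const (w j)
  simpa [Matrix.mulVec, dotProduct, Finset.mul_sum, mul_assoc, Matrix.single_apply] using hlim

lemma abs_colCharacter (hm : IsCornerDominated p q m) (g : G) : |hm.colCharacter g| = 1 := by
  refine abs_eq_one_of_one_le_abs _ (fun h hh => ?_) g
  have hpow : Tendsto (h ^ · : ℕ → G) atTop cofinite :=
    Nat.cofinite_eq_atTop ▸ (injective_pow_iff_not_isOfFinOrder.2 hh).tendsto_cofinite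
  refine one_le_abs_of_tendsto_div (hm.tendsto_abs_corner.comp hpow) ?_
  change Tendsto _ _ (𝓝 (m h p p))
  simpa only [pow_succ', Function.comp_def] using (hm.tendsto_corner_mul_left h).comp hpow

lemma abs_rowCharacter (hm : IsCornerDominated p q m) (g : G) : |hm.rowCharacter g| = 1 := by
  refine abs_eq_one_of_one_le_abs _ (fun h hh => ?_) g
  have hpow : Tendsto (h ^ · : ℕ → G) atTop cofinite :=
    Nat.cofinite_eq_atTop ▸ (injective_pow_iff_not_isOfFinOrder.2 hh).tendsto_cofinite
  refine one_le_abs_of_tendsto_div (hm.tendsto_abs_corner.comp hpow) ?_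
  change Tendsto _ _ (𝓝 (m h q q))
  simpa only [pow_succ, Function.comp_def] using (hm.tendsto_corner_mul_right h).comp hpow

lemma exists_finiteIndex_corners_eq_one (hm : IsCornerDominated p q m) :
    ∃ K : Subgroup G, K.FiniteIndex ∧ ∀ g ∈ K, m g p p = 1 ∧ m g q q = 1 := by
  refine ⟨(hm.colCharacter.prod hm.rowCharacter).ker, finiteIndex_ker_of_finite_range _ ?_,
    fun g hg => Prod.ext_iff.1 (MonoidHom.mem_ker.1 hg)⟩
  refine Set.Finite.subset (s := {1, -1} ×ˢ {1, -1}) (Set.toFinite _) ?_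
  rintro _ ⟨g, rfl⟩
  exact ⟨eq_or_eq_neg_of_abs_eq (hm.abs_colCharacter g),
    eq_or_eq_neg_of_abs_eq (hm.abs_rowCharacter g)⟩

lemma finite_not_corner_pos_mul_left_iff (hm : IsCornerDominated p q m) {h : G}
    (hh : m h p p = 1) :
    {g | ¬(0 < m (h * g) p q ↔ 0 < m g p q)}.Finite := by
  have hpos := (hm.tendsto_corner_mul_left h).eventually_const_lt (hh ▸ one_pos)
  refine eventually_cofinite.1 (hpos.mono fun g hg => ?_)
  exact (div_pos_iff.1 hg).elim (fun hg => iff_of_true hg.1 hg.2)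
    fun hg => iff_of_false hg.1.not_gt hg.2.not_gt

lemma finite_not_corner_pos_mul_right_iff (hm : IsCornerDominated p q m) {h : G}
    (hh : m h q q = 1) :
    {g | ¬(0 < m (g * h) p q ↔ 0 < m g p q)}.Finite := by
  have hpos := (hm.tendsto_corner_mul_right h).eventually_const_lt (hh ▸ one_pos)
  refine eventually_cofinite.1 (hpos.mono fun g hg => ?_)
  exact (div_pos_iff.1 hg).elim (fun hg => iff_of_true hg.1 hg.2)
    fun hg => iff_of_false hg.1.not_gt hg.2.not_gt

lemma eventually_corner_inv_div_pos (hm : IsCornerDominated p q m)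
    (hsign : {g | 0 < m g p q}.Finite ∨ {g | 0 < m g p q}ᶜ.Finite) :
    ∀ᶠ g in cofinite, 0 < m g⁻¹ p q / m g p q := by
  have hne := hm.tendsto_abs_corner.eventually_gt_atTop 0
  have hinv := (inv_injective (G := G)).tendsto_cofinite
  rcases hsign with hneg | hpos
  · have hneg : ∀ᶠ g in cofinite, m g p q < 0 := by
      filter_upwards [eventually_cofinite.2 (hneg.subset fun g hg => not_not.1 hg), hne] with
        g hg hg0
      exact lt_of_le_of_ne (not_lt.1 hg) (abs_pos.1 hg0)
    filter_upwards [hneg, hinv.eventually hneg] with g hg hg'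
    exact div_pos_of_neg_of_neg hg' hg
  · have hpos : ∀ᶠ g in cofinite, 0 < m g p q := eventually_cofinite.2 hpos
    filter_upwards [hpos, hinv.eventually hpos] with g hg hg'
    exact div_pos hg' hg

lemma tendsto_sum_inv_mul (hm : IsCornerDominated p q m) (hpq : p ≠ q)
    (hq : ∀ g, m g q q = 1) {w : ι → ℝ} {D : ℝ} {l : Filter G} (hl : l ≤ cofinite)
    (hbdd : ∀ i ≠ p, ∀ᶠ g in l, |(m g⁻¹ *ᵥ w) i| ≤ D) :
    Tendsto (fun g => ∑ i ∈ {p}ᶜ, (m g p q)⁻¹ * m g p i * (m g⁻¹ *ᵥ w) i) l (𝓝 (w q)) := by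
  have hterm : ∀ i ∈ ({p}ᶜ : Finset ι),
      Tendsto (fun g => (m g p q)⁻¹ * m g p i * (m g⁻¹ *ᵥ w) i) l
        (𝓝 (if i = q then w q else 0)) := fun i hi => by
    have hent := (hm.tendsto_inv_mul_apply p i).mono_left hl
    split_ifs with hiq
    · subst hiq
      have hrow (g : G) : (m g⁻¹ *ᵥ w) i = w i := by
        rw [mulVec_apply_eq_add_sum_compl (hq g⁻¹), Finset.sum_eq_zero, add_zero]
        exact fun j hj => by rw [hm.row_eq_zero _ j (by simpa using hj), zero_mul]
      simpa [hrow] using hent.mul_const (w i)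
    · rw [Matrix.single_apply_of_col_ne _ _ (Ne.symm hiq)] at hent
      exact hent.zero_mul_isBoundedUnder_le
        (isBoundedUnder_of_eventually_le (hbdd i (by simpa using hi)))
  simpa [hpq.symm] using tendsto_finsetSum _ hterm

-- On the bad set, reading the `p`-th entry of `m g (m g⁻¹ w) = w` relative to the corner entry
-- shows that the corner entries of `g` and `g⁻¹` have asymptotic ratio `-1`.
lemma finite_abs_mulVec_le (hm : IsCornerDominated p q m) (hpq : p ≠ q)
    (hp : ∀ g, m g p p = 1) (hq : ∀ g, m g q q = 1)
    (hsign : {g | 0 < m g p q}.Finite ∨ {g | 0 < m g p q}ᶜ.Finite)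
    {w : ι → ℝ} (hw : w q ≠ 0) (D : ℝ) :
    {g | ∀ i ≠ p, |(m g *ᵥ w) i| ≤ D}.Finite := by
  by_contra hinf
  let S := {g | ∀ i ≠ p, |(m g⁻¹ *ᵥ w) i| ≤ D}
  have hS : S.Infinite := fun hfin => hinf
    ((hfin.preimage inv_injective.injOn).subset fun g hg => by simpa [S] using hg)
  have : NeBot (cofinite ⊓ 𝓟 S) := cofinite_inf_principal_neBot_iff.2 hS
  have hle : cofinite ⊓ 𝓟 S ≤ cofinite := inf_le_left
  have hbdd : ∀ i ≠ p, ∀ᶠ g in cofinite ⊓ 𝓟 S, |(m g⁻¹ *ᵥ w) i| ≤ D := fun i hi =>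
    (eventually_principal.2 fun g hg => hg i hi : ∀ᶠ g in 𝓟 S, _).filter_mono inf_le_right
  have hmiddle := hm.tendsto_sum_inv_mul hpq hq hle hbdd
  have hleft : Tendsto (fun g => (m g p q)⁻¹ * w p) (cofinite ⊓ 𝓟 S) (𝓝 0) := by
    have h0 := (tendsto_inv_atTop_zero.comp hm.tendsto_abs_corner).mono_left hle
    refine tendsto_zero_iff_abs_tendsto_zero _ |>.2 ?_
    simpa [Function.comp_def, abs_mul, abs_inv] using h0.mul_const |w p|
  have hsplit (g : G) : (m g p q)⁻¹ * w p =
      (m g p q)⁻¹ * (m g⁻¹ *ᵥ w) p + ∑ i ∈ {p}ᶜ, (m g p q)⁻¹ * m g p i * (m g⁻¹ *ᵥ w) i := by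
    have hmul : (m g *ᵥ (m g⁻¹ *ᵥ w)) p = w p := by
      rw [mulVec_mulVec, ← map_mul, mul_inv_cancel, map_one, one_mulVec]
    rw [← hmul, mulVec_apply_eq_add_sum_compl (hp g), mul_add, Finset.mul_sum]
    simp only [mul_assoc]
  have hratio : Tendsto (fun g => (m g p q)⁻¹ * (m g⁻¹ *ᵥ w) p) (cofinite ⊓ 𝓟 S) (𝓝 (-w q)) := by
    simpa [hsplit] using hleft.sub hmiddle
  have hcorner := hratio.div (((hm.tendsto_inv_mul_mulVec w).comp
    inv_injective.tendsto_cofinite).mono_left hle) hw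
  rw [neg_div, div_self hw] at hcorner
  obtain ⟨g, hneg, hpos⟩ := ((hcorner.eventually_lt_const neg_one_lt_zero).and
    ((hm.eventually_corner_inv_div_pos hsign).filter_mono hle)).exists
  refine hneg.not_ge ?_
  simp only [Pi.div_apply, Function.comp_apply]
  rw [mul_div_mul_comm, inv_div_inv]
  exact mul_nonneg hpos.le (by by_cases h : (m g⁻¹ *ᵥ w) p = 0 <;> simp [h])

lemma virtuallyFreeAbelian_or_finite_abs_mulVec_le (hm : IsCornerDominated p q m) (hpq : p ≠ q)
    (hp : ∀ g, m g p p = 1) (hq : ∀ g, m g q q = 1) {h : G} (hh : ¬IsOfFinOrder h) :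
    VirtuallyFreeAbelian 1 G ∨
      ∀ w : ι → ℝ, w q ≠ 0 → ∀ D, {g | ∀ i ≠ p, |(m g *ᵥ w) i| ≤ D}.Finite :=
  (virtuallyFreeAbelian_or_finite_or_finite_compl hh (hm.finite_not_corner_pos_mul_right_iff (hq h))
    fun g => hm.finite_not_corner_pos_mul_left_iff (hp g)).imp_right fun hsign _ hw D =>
      hm.finite_abs_mulVec_le hpq hp hq hsign hw D

lemma virtuallyFreeAbelian_of_fixed (hm : IsCornerDominated p q m)
    (hp : ∀ g, m g p p = 1) {w : ι → ℝ} (hw : w q ≠ 0)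
    (hfix : ∀ g, ∀ i ≠ p, (m g *ᵥ w) i = w i) : VirtuallyFreeAbelian 1 G := by
  have hcocycle (g h : G) : (m (g * h) *ᵥ w) p = (m g *ᵥ w) p + (m h *ᵥ w) p - w p := by
    rw [map_mul, ← mulVec_mulVec, mulVec_apply_eq_add_sum_compl (hp g),
      mulVec_apply_eq_add_sum_compl (hp g) w]
    rw [Finset.sum_congr rfl fun i hi => by rw [hfix h i (by simpa using hi)]]
    ring
  let l : G →* Multiplicative ℝ := MonoidHom.mk' (fun g => .ofAdd ((m g *ᵥ w) p - w p))
    fun g h => by rw [hcocycle, ← ofAdd_add]; congr 1; ring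
  have hlim : Tendsto (fun g => |(m g *ᵥ w) p|) cofinite atTop := by
    have := hm.tendsto_abs_corner.atTop_mul_pos (abs_pos.2 hw) (hm.tendsto_inv_mul_mulVec w).abs
    refine this.congr' ((hm.tendsto_abs_corner.eventually_gt_atTop 0).mono fun g hg => ?_)
    rw [← abs_mul, mul_inv_cancel_left₀ (abs_pos.1 hg)]
  have hl := virtuallyFreeAbelian_of_proper l fun D =>
    (finite_le_of_tendsto_atTop hlim (D + |w p|)).subset fun g hg => ?_
  · rwa [Module.finrank_self] at hl
  · have := abs_sub_abs_le_abs_sub ((m g *ᵥ w) p) (w p)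
    exact sub_le_iff_le_add.1 (this.trans hg)

end IsCornerDominated

end CornerDominated

section PlaneMatrices

variable {A P U V : Matrix (Fin 2) (Fin 2) ℝ} {v w : Fin 2 → ℝ}

lemma sq_eq_trace_smul_sub_det_smul (A : Matrix (Fin 2) (Fin 2) ℝ) :
    A ^ 2 = A.trace • A - A.det • 1 := by
  have h := A.aeval_self_charpoly
  rw [charpoly_fin_two] at h
  simp only [map_add, map_sub, map_mul, map_pow, Polynomial.aeval_X, Polynomial.aeval_C,
    Algebra.algebraMap_eq_smul_one, smul_mul_assoc, one_mul] at h
  rw [← sub_eq_zero, ← h]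
  abel

lemma det_one_sub_eq (A : Matrix (Fin 2) (Fin 2) ℝ) : (1 - A).det = 1 - A.trace + A.det := by
  simp [det_fin_two, trace_fin_two]
  ring

lemma abs_trace_le_two_of_isOfFinOrder (hdet : A.det = 1) (hA : IsOfFinOrder A) :
    |A.trace| ≤ 2 := by
  by_contra! htr
  have hrec (n : ℕ) : (A ^ (n + 2)).trace = A.trace * (A ^ (n + 1)).trace - (A ^ n).trace := by
    rw [pow_add, sq_eq_trace_smul_sub_det_smul, hdet, mul_sub, mul_smul_comm, one_smul, mul_one,
      ← pow_succ, trace_sub, trace_smul, smul_eq_mul]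
  have hmono : StrictMono fun n => |(A ^ n).trace| := strictMono_nat_of_lt_succ fun n => by
    induction n with
    | zero => simpa [trace_one] using htr
    | succ n ih =>
      have h := abs_sub_abs_le_abs_sub (A.trace * (A ^ (n + 1)).trace) (A ^ n).trace
      rw [← hrec, abs_mul] at h
      nlinarith [abs_nonneg (A ^ n).trace]
  obtain ⟨n, hn, hpow⟩ := isOfFinOrder_iff_pow_eq_one.1 hA
  simpa [hpow] using hmono hn

/-- The standard area form on the plane. -/
def planeArea (v w : Fin 2 → ℝ) : ℝ := v 0 * w 1 - v 1 * w 0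

lemma planeArea_add_left (u v w : Fin 2 → ℝ) :
    planeArea (u + v) w = planeArea u w + planeArea v w := by
  simp only [planeArea, Pi.add_apply]
  ring

lemma planeArea_add_right (u v w : Fin 2 → ℝ) :
    planeArea u (v + w) = planeArea u v + planeArea u w := by
  simp only [planeArea, Pi.add_apply]
  ring

lemma planeArea_smul_left (c : ℝ) (v w : Fin 2 → ℝ) : planeArea (c • v) w = c * planeArea v w := by
  simp only [planeArea, Pi.smul_apply, smul_eq_mul]
  ring

lemma planeArea_self (v : Fin 2 → ℝ) : planeArea v v = 0 := sub_eq_zero.2 (mul_comm _ _)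

lemma planeArea_mulVec (hA : A.det = 1) (v w : Fin 2 → ℝ) :
    planeArea (A *ᵥ v) (A *ᵥ w) = planeArea v w := by
  simp only [planeArea, mulVec, dotProduct, Fin.sum_univ_two]
  linear_combination (v 0 * w 1 - v 1 * w 0) * ((det_fin_two A).symm.trans hA)

lemma exists_eq_smul_of_planeArea_eq_zero (hv : v ≠ 0) (h : planeArea v w = 0) :
    ∃ c : ℝ, w = c • v := by
  obtain ⟨i, hi⟩ := Function.ne_iff.1 hv
  refine ⟨w i / v i, funext fun j => ?_⟩
  rw [Pi.smul_apply, smul_eq_mul, div_mul_eq_mul_div, eq_div_iff hi]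
  unfold planeArea at h
  fin_cases i <;> fin_cases j <;> dsimp <;> linarith

lemma exists_planeArea_eq_one (hv : v ≠ 0) : ∃ w, planeArea v w = 1 := by
  obtain ⟨i, hi⟩ := Function.ne_iff.1 hv
  fin_cases i
  · exact ⟨![0, (v 0)⁻¹], by simpa [planeArea] using mul_inv_cancel₀ hi⟩
  · exact ⟨![-(v 1)⁻¹, 0], by simpa [planeArea] using mul_inv_cancel₀ hi⟩

lemma eq_planeArea_smul_add (hvw : planeArea v w = 1) (u : Fin 2 → ℝ) :
    u = planeArea u w • v + planeArea v u • w := by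
  unfold planeArea at *
  ext i
  fin_cases i <;> simp <;> linear_combination (-u _) * hvw

lemma planeArea_eq_zero_of_mulVec_eq_zero (hA : A ≠ 0) (hv : A *ᵥ v = 0) (hw : A *ᵥ w = 0) :
    planeArea v w = 0 := by
  by_contra hne
  refine hA (ext fun i j => ?_)
  have hvi := congrFun hv i
  have hwi := congrFun hw i
  simp only [mulVec, dotProduct, Fin.sum_univ_two, Pi.zero_apply] at hvi hwi
  refine (mul_eq_zero.1 ?_).resolve_right hne
  unfold planeArea
  fin_cases j <;> dsimp
  · linear_combination w 1 * hvi - v 1 * hwi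
  · linear_combination v 0 * hwi - w 0 * hvi

-- By Cayley–Hamilton, `N * B` squares to zero, so `B` preserves the kernel line of `N`.
lemma mulVec_mulVec_eq_zero {N B : Matrix (Fin 2) (Fin 2) ℝ} (hN : N.det = 0) (hB : B.det = 1)
    (htr : (N * B).trace = 0) (x : Fin 2 → ℝ) : N *ᵥ (B *ᵥ (N *ᵥ x)) = 0 := by
  have hsq : N * B * N * B = 0 := by
    rw [mul_assoc (N * B), ← sq, sq_eq_trace_smul_sub_det_smul, htr, det_mul, hN]
    simp
  have hunit : IsUnit B := (isUnit_iff_isUnit_det B).2 (hB ▸ isUnit_one)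
  rw [mulVec_mulVec, mulVec_mulVec, hunit.mul_left_eq_zero.1 hsq, zero_mulVec]

lemma eq_one_or_eq_neg_one_of_mulVec_eq_smul (hdet : A.det = 1) (htr : |A.trace| ≤ 2) (hv : v ≠ 0)
    {c : ℝ} (hc : A *ᵥ v = c • v) : c = 1 ∨ c = -1 := by
  have hroot : c ^ 2 = A.trace * c - 1 := by
    have h := congrArg (· *ᵥ v) (sq_eq_trace_smul_sub_det_smul A)
    simp only [hdet, sq, ← mulVec_mulVec, hc, mulVec_smul, sub_mulVec, smul_mulVec, one_mulVec,
      smul_smul, ← sub_smul] at h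
    exact (sq c).trans (smul_left_injective ℝ hv h)
  refine eq_or_eq_neg_of_abs_eq (eq_of_sub_eq_zero (pow_eq_zero_iff two_ne_zero |>.1 ?_))
  refine le_antisymm ?_ (sq_nonneg _)
  have h := (le_abs_self (A.trace * c)).trans_eq (abs_mul _ _)
  nlinarith [sq_abs c, abs_nonneg c]

lemma pow_eq_one_add_nsmul_of_trace_eq_two (hdet : P.det = 1) (htr : P.trace = 2) (n : ℕ) :
    P ^ n = 1 + n • (P - 1) := by
  have hsq : P * P = 2 • P - 1 := by
    rw [← sq, sq_eq_trace_smul_sub_det_smul, hdet, htr, one_smul, ofNat_smul_eq_nsmul]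
  induction n with
  | zero => simp
  | succ n ih =>
    rw [pow_succ, ih, add_mul, smul_mul_assoc, sub_mul, hsq, one_mul]
    module

lemma trace_mul_eq_zero_of_bounded (hdet : P.det = 1) (htr : P.trace = 2)
    (hbdd : ∀ n : ℕ, |(P ^ n * A).trace| ≤ 2) : ((P - 1) * A).trace = 0 := by
  by_contra hne
  obtain ⟨n, hn⟩ := exists_nat_gt ((2 + |A.trace|) / |((P - 1) * A).trace|)
  rw [div_lt_iff₀ (abs_pos.2 hne)] at hn
  have h := hbdd n
  rw [pow_eq_one_add_nsmul_of_trace_eq_two hdet htr, add_mul, one_mul, smul_mul_assoc, trace_add,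
    trace_smul, nsmul_eq_mul] at h
  have := abs_sub_abs_le_abs_sub (n * ((P - 1) * A).trace) (-A.trace)
  rw [abs_neg, abs_mul, Nat.abs_cast, sub_neg_eq_add, add_comm _ A.trace] at this
  linarith

lemma det_commutator_eq (hU : U.det = 1) (hV : V.det = 1) :
    (U * V - V * U).det = 2 - (U * V * (U⁻¹ * V⁻¹)).trace := by
  have hadj : (U * V - V * U).det =
      2 * (U.det * V.det) - (U * V * (U.adjugate * V.adjugate)).trace := by
    simp [adjugate_fin_two, det_fin_two, trace_fin_two, mul_apply, Fin.sum_univ_two]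
    ring
  rw [hadj, inv_def, inv_def, hU, hV, Ring.inverse_one, one_smul, one_smul, mul_one, mul_one]

lemma discr_neg_of_abs_trace_lt_two (hU : U.det = 1) (hell : |U.trace| < 2) :
    (U 0 0 - U 1 1) ^ 2 + 4 * U 0 1 * U 1 0 < 0 := by
  have h := sq_lt_sq' (abs_lt.1 hell).1 (abs_lt.1 hell).2
  rw [det_fin_two] at hU
  rw [trace_fin_two] at h
  linarith

lemma eq_zero_of_trace_mul_eq_zero (hU : U.det = 1) (hell : |U.trace| < 2)
    (htr : A.trace = 0) (htrU : (A * U).trace = 0) (hdet : 0 ≤ A.det) : A = 0 := by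
  have hdisc := discr_neg_of_abs_trace_lt_two hU hell
  rw [trace_fin_two] at htr htrU
  simp only [mul_apply, Fin.sum_univ_two] at htrU
  rw [det_fin_two] at hdet
  have h11 : A 1 1 = -A 0 0 := by linarith
  have hb : U 0 1 ≠ 0 := fun hb => hdisc.not_ge <| by
    rw [hb, mul_zero, zero_mul, add_zero]
    exact sq_nonneg _
  have hsq : (2 * U 0 1 * A 0 0 - A 0 1 * (U 0 0 - U 1 1)) ^ 2 -
      A 0 1 ^ 2 * ((U 0 0 - U 1 1) ^ 2 + 4 * U 0 1 * U 1 0) ≤ 0 := by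
    rw [h11] at hdet htrU
    have := mul_nonneg (sq_nonneg (U 0 1)) hdet
    linear_combination 4 * this - 4 * U 0 1 * A 0 1 * htrU
  have h01 : A 0 1 = 0 := by
    by_contra hne
    nlinarith [sq_nonneg (2 * U 0 1 * A 0 0 - A 0 1 * (U 0 0 - U 1 1)), sq_pos_of_ne_zero hne]
  have h00 : A 0 0 = 0 := by
    simpa [h01, hb] using hsq.antisymm (by simpa [h01] using sq_nonneg (2 * U 0 1 * A 0 0))
  have h10 : A 1 0 = 0 := by
    simpa [h01, h00, h11, hb] using htrU
  ext i j
  fin_cases i <;> fin_cases j <;> simp [h00, h01, h10, h11]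

lemma commute_of_trace_commutator_le_two (hU : U.det = 1) (hV : V.det = 1) (hell : |U.trace| < 2)
    (htr : (U * V * (U⁻¹ * V⁻¹)).trace ≤ 2) : Commute U V := by
  refine sub_eq_zero.1 (eq_zero_of_trace_mul_eq_zero hU hell ?_ ?_ ?_)
  · rw [trace_sub, trace_mul_comm, sub_self]
  · rw [sub_mul, trace_sub, mul_assoc, trace_mul_comm, sub_self]
  · rw [det_commutator_eq hU hV]
    exact sub_nonneg.2 htr

/-- For `U` with no real eigenvalue, a definite quadratic form preserved by the centralizer of `U`
in `SL₂`. -/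
def ellipticForm (U : Matrix (Fin 2) (Fin 2) ℝ) (x : Fin 2 → ℝ) : ℝ := planeArea x (U *ᵥ x)

lemma ellipticForm_mulVec (hV : V.det = 1) (hUV : Commute U V) (x : Fin 2 → ℝ) :
    ellipticForm U (V *ᵥ x) = ellipticForm U x := by
  rw [ellipticForm, mulVec_mulVec, hUV.eq, ← mulVec_mulVec, planeArea_mulVec hV, ellipticForm]

lemma exists_norm_le_sqrt_ellipticForm (hU : U.det = 1) (hell : |U.trace| < 2) :
    ∃ C, ∀ x, ‖x‖ ≤ √(C * |ellipticForm U x|) := by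
  have hdisc := discr_neg_of_abs_trace_lt_two hU hell
  set δ := (U 0 0 - U 1 1) ^ 2 + 4 * U 0 1 * U 1 0
  have hbound {s t Q : ℝ} (h : t ^ 2 * -δ ≤ 4 * s * Q) (hs : |s| ≤ |U 0 1| + |U 1 0|) :
      t ^ 2 ≤ 4 * (|U 0 1| + |U 1 0|) / -δ * |Q| := by
    rw [div_mul_eq_mul_div, le_div_iff₀ (neg_pos.2 hdisc)]
    have := (le_abs_self (s * Q)).trans_eq (abs_mul s Q)
    linarith [mul_le_mul_of_nonneg_right hs (abs_nonneg Q)]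
  refine ⟨4 * (|U 0 1| + |U 1 0|) / -δ, fun x => ?_⟩
  refine (pi_norm_le_iff_of_nonneg (Real.sqrt_nonneg _)).2 (Fin.forall_fin_two.2 ⟨?_, ?_⟩) <;>
    refine Real.abs_le_sqrt ?_
  · refine hbound (s := -U 0 1) ?_ (by simp)
    simp only [ellipticForm, planeArea, mulVec, dotProduct, Fin.sum_univ_two, δ]
    linear_combination sq_nonneg (2 * U 0 1 * x 1 + (U 0 0 - U 1 1) * x 0)
  · refine hbound (s := U 1 0) ?_ (by simp)
    simp only [ellipticForm, planeArea, mulVec, dotProduct, Fin.sum_univ_two, δ]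
    linear_combination sq_nonneg (2 * U 1 0 * x 0 - (U 0 0 - U 1 1) * x 1)

lemma eq_of_mulVec_eq_of_commute (hU : U.det = 1) (hell : |U.trace| < 2) (hA : Commute U A)
    (hV : Commute U V) (hv : v ≠ 0) (h : A *ᵥ v = V *ᵥ v) : A = V := by
  obtain ⟨C, hC⟩ := exists_norm_le_sqrt_ellipticForm hU hell
  by_contra hne
  have hzero : (A - V) *ᵥ v = 0 := by rw [sub_mulVec, h, sub_self]
  have hzero' : (A - V) *ᵥ (U *ᵥ v) = 0 := by
    rw [mulVec_mulVec, ← (hA.sub_right hV).eq, ← mulVec_mulVec, hzero, mulVec_zero]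
  have hform : ellipticForm U v = 0 :=
    planeArea_eq_zero_of_mulVec_eq_zero (sub_ne_zero.2 hne) hzero hzero'
  exact hv (norm_le_zero_iff.1 (by simpa [hform] using hC v))

end PlaneMatrices

section PlaneRepresentations

variable {G : Type*} [Group G] {B : G →* Matrix (Fin 2) (Fin 2) ℝ}

lemma abs_trace_sq_eq_two {A : Matrix (Fin 2) (Fin 2) ℝ} (hdet : A.det = 1) (htr : |A.trace| = 2) :
    (A ^ 2).trace = 2 := by
  rw [sq_eq_trace_smul_sub_det_smul, hdet, trace_sub, trace_smul, smul_eq_mul, ← abs_mul_abs_self,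
    htr]
  norm_num

lemma eq_one_or_eq_neg_one_of_sq_eq_one {A : Matrix (Fin 2) (Fin 2) ℝ} (hdet : A.det = 1)
    (htr : |A.trace| = 2) (hsq : A ^ 2 = 1) : A = 1 ∨ A = -1 := by
  have hlin : A.trace • A = (2 : ℝ) • (1 : Matrix (Fin 2) (Fin 2) ℝ) := by
    have h := sq_eq_trace_smul_sub_det_smul A
    rw [hsq, hdet, eq_sub_iff_add_eq] at h
    rw [← h]
    module
  refine (eq_or_eq_neg_of_abs_eq htr).imp (fun h => ?_) fun h => ?_ <;> rw [h] at hlin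
  · exact smul_right_injective _ two_ne_zero hlin
  · exact smul_right_injective _ (two_ne_zero (α := ℝ)) (by simpa [neg_eq_iff_eq_neg] using hlin)

lemma exists_eigenvector_of_abs_trace_le_two (hdet : ∀ g, (B g).det = 1)
    (htr : ∀ g, |(B g).trace| ≤ 2) {u : G} (hu : |(B u).trace| = 2) (hu2 : B u ^ 2 ≠ 1) :
    ∃ v ≠ 0, ∀ g, B g *ᵥ v = v ∨ B g *ᵥ v = -v := by
  have hdet2 : (B u ^ 2).det = 1 := by rw [det_pow, hdet, one_pow]
  have htr2 := abs_trace_sq_eq_two (hdet u) hu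
  obtain ⟨x, hx⟩ : ∃ x, (B u ^ 2 - 1) *ᵥ x ≠ 0 := by
    by_contra! h
    exact hu2 (sub_eq_zero.1 (mulVec_injective (funext fun x => by simpa using h x)))
  have hN : (B u ^ 2 - 1).det = 0 := by
    rw [← neg_sub, det_neg, det_one_sub_eq, hdet2, htr2]
    norm_num
  refine ⟨_, hx, fun g => ?_⟩
  have hker (g : G) : (B u ^ 2 - 1) *ᵥ (B g *ᵥ ((B u ^ 2 - 1) *ᵥ x)) = 0 := by
    refine mulVec_mulVec_eq_zero hN (hdet g) (trace_mul_eq_zero_of_bounded hdet2 htr2 fun n => ?_) x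
    rw [← pow_mul, ← map_pow, ← map_mul]
    exact htr _
  obtain ⟨c, hc⟩ := exists_eq_smul_of_planeArea_eq_zero hx
    (planeArea_eq_zero_of_mulVec_eq_zero (sub_ne_zero.2 hu2) (by simpa using hker 1) (hker g))
  rcases eq_one_or_eq_neg_one_of_mulVec_eq_smul (hdet g) (htr g) hx hc with rfl | rfl
  · exact .inl (by simpa using hc)
  · exact .inr (by simpa using hc)

lemma exists_eigenvector_or_elliptic (hdet : ∀ g, (B g).det = 1) (htr : ∀ g, |(B g).trace| ≤ 2) :
    (∃ v ≠ 0, ∀ g, B g *ᵥ v = v ∨ B g *ᵥ v = -v) ∨ ∃ u, |(B u).trace| < 2 := by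
  refine or_iff_not_imp_right.2 fun hell => ?_
  have htr (g : G) : |(B g).trace| = 2 := (htr g).antisymm (not_lt.1 fun h => hell ⟨g, h⟩)
  by_cases hsq : ∀ g, B g ^ 2 = 1
  · refine ⟨1, one_ne_zero, fun g => (eq_one_or_eq_neg_one_of_sq_eq_one (hdet g) (htr g)
      (hsq g)).imp (fun h => ?_) fun h => ?_⟩
    · rw [h, one_mulVec]
    · rw [h, neg_mulVec, one_mulVec]
  · obtain ⟨u, hu⟩ := not_forall.1 hsq
    exact exists_eigenvector_of_abs_trace_le_two hdet (fun g => (htr g).le) (htr u) hu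

end PlaneRepresentations

section Shears

open scoped commutatorElement

variable {G : Type*} [Group G]

/-- The maps `b y x` are the coordinates of an affine action of `G` on the plane by shears, where
`g` acts as `(s, t) ↦ (s + b g * t + x g, t + y g)`. -/
structure IsShearCocycle (b y x : G → ℝ) : Prop where
  slope_mul : ∀ g k, b (g * k) = b g + b k
  height_mul : ∀ g k, y (g * k) = y g + y k
  width_mul : ∀ g k, x (g * k) = x g + x k + b g * y k

lemma apply_zpow_eq_mul {f : G → ℝ} (hf : ∀ g h, f (g * h) = f g + f h) (g : G) (n : ℤ) :
    f (g ^ n) = n * f g := by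
  have h := congrArg Multiplicative.toAdd
    (map_zpow (MonoidHom.mk' (fun g => Multiplicative.ofAdd (f g)) fun g h => by
      rw [hf, ofAdd_add]) g n)
  simpa using h

lemma abs_sub_round_div_mul_le {c : ℝ} (hc : c ≠ 0) (t : ℝ) : |t - round (t / c) * c| ≤ |c| := by
  have h := mul_le_mul_of_nonneg_right (abs_sub_round (t / c)) (abs_nonneg c)
  rw [← abs_mul, sub_mul, div_mul_cancel₀ _ hc] at h
  linarith [abs_nonneg c]

namespace IsShearCocycle

variable {b y x : G → ℝ} {g k : G}

lemma commutator (h : IsShearCocycle b y x) (g k : G) :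
    b ⁅g, k⁆ = 0 ∧ y ⁅g, k⁆ = 0 ∧ x ⁅g, k⁆ = b g * y k - b k * y g := by
  have hmul : ⁅g, k⁆ * (k * g) = g * k := by group
  have hb := congrArg b hmul
  have hy := congrArg y hmul
  have hx := congrArg x hmul
  simp only [h.slope_mul, h.height_mul, h.width_mul] at hb hy hx
  have hb0 : b ⁅g, k⁆ = 0 := by linarith
  rw [hb0] at hx
  exact ⟨hb0, by linarith, by linarith⟩

lemma width_zpow_mul (h : IsShearCocycle b y x) {z : G} (hz : b z = 0) (n : ℤ) :
    ∀ k, x (z ^ n * k) = n * x z + x k := by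
  have hstep (k : G) : x (z * k) = x z + x k := by rw [h.width_mul, hz, zero_mul, add_zero]
  induction n with
  | zero => simp
  | succ n ih => intro k; rw [_root_.zpow_add_one, mul_assoc, ih, hstep]; push_cast; ring
  | pred n ih =>
    intro k
    have hinv := hstep (z⁻¹ * k)
    rw [mul_inv_cancel_left] at hinv
    rw [_root_.zpow_sub_one, mul_assoc, ih]
    push_cast
    linarith

-- If the commutator `⁅g, k⁆` were a nontrivial translation, then bounded corrections of the powers
-- of `g` by powers of `k` and of `⁅g, k⁆` would move the origin by a bounded amount.
lemma slope_mul_height_comm_of_ne_zero (h : IsShearCocycle b y x)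
    (hproper : ∀ D, {g | |x g| ≤ D ∧ |y g| ≤ D}.Finite) (hk : y k ≠ 0) :
    b g * y k = b k * y g := by
  by_contra hne
  obtain ⟨hbz, hyz, hxz⟩ := h.commutator g k
  set z := ⁅g, k⁆
  have hδ : x z ≠ 0 := hxz ▸ sub_ne_zero.2 hne
  let u (n : ℤ) : G := g ^ n * k ^ (-round (n * y g / y k))
  let e (n : ℤ) : G := z ^ (-round (x (u n) / x z)) * u n
  have hy (n : ℤ) : y (e n) = n * y g - round (n * y g / y k) * y k := by
    simp only [e, u, h.height_mul, apply_zpow_eq_mul h.height_mul, hyz]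
    push_cast
    ring
  have hb (n : ℤ) : b (e n) = n * b g - round (n * y g / y k) * b k := by
    simp only [e, u, h.slope_mul, apply_zpow_eq_mul h.slope_mul, hbz]
    push_cast
    ring
  have hx (n : ℤ) : x (e n) = x (u n) - round (x (u n) / x z) * x z := by
    simp only [e, h.width_zpow_mul hbz]
    push_cast
    ring
  have hinj : Function.Injective e := fun n n' hnn' => by
    have key (n : ℤ) : b (e n) * y k - y (e n) * b k = n * x z := by
      rw [hb, hy, hxz]
      ring
    have := (key n).symm.trans (hnn' ▸ key n')
    exact_mod_cast mul_right_cancel₀ hδ this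
  refine Set.infinite_range_of_injective hinj
    ((hproper (max |x z| |y k|)).subset (Set.range_subset_iff.2 fun n => ⟨?_, ?_⟩))
  · exact (hx n ▸ abs_sub_round_div_mul_le hδ _).trans (le_max_left _ _)
  · exact (hy n ▸ abs_sub_round_div_mul_le hk _).trans (le_max_right _ _)

lemma exists_slope_mul_height_eq (h : IsShearCocycle b y x)
    (hproper : ∀ D, {g | |x g| ≤ D ∧ |y g| ≤ D}.Finite) :
    ∃ κ, ∀ g k, b g * y k = κ * y g * y k := by
  by_cases hy : ∀ k, y k = 0
  · exact ⟨0, fun g k => by rw [hy k, mul_zero, mul_zero]⟩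
  obtain ⟨k₀, hk₀⟩ := not_forall.1 hy
  refine ⟨b k₀ / y k₀, fun g k => ?_⟩
  rw [div_mul_eq_mul_div, ← h.slope_mul_height_comm_of_ne_zero hproper hk₀,
    mul_div_cancel_right₀ _ hk₀]

lemma virtuallyFreeAbelian (h : IsShearCocycle b y x)
    (hproper : ∀ D, {g | |x g| ≤ D ∧ |y g| ≤ D}.Finite) : VirtuallyFreeAbelian 2 G := by
  obtain ⟨κ, hκ⟩ := h.exists_slope_mul_height_eq hproper
  -- Subtracting `κ / 2 * y ^ 2` straightens the parabolic orbit of the origin to a line.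
  let l : G →* Multiplicative (ℝ × ℝ) :=
    MonoidHom.mk' (fun g => .ofAdd (x g - κ / 2 * y g ^ 2, y g)) fun g k => by
      rw [← ofAdd_add, Prod.mk_add_mk, h.width_mul, h.height_mul, hκ]
      congr 2
      ring
  have hl := virtuallyFreeAbelian_of_proper l fun D =>
    (hproper (D + |κ / 2| * D ^ 2)).subset fun g hg => ?_
  · rwa [Module.finrank_prod, Module.finrank_self] at hl
  · obtain ⟨hxg, hyg⟩ := norm_prod_le_iff.1 hg
    change |x g - κ / 2 * y g ^ 2| ≤ D at hxg
    change |y g| ≤ D at hyg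
    have hsq : |κ / 2 * y g ^ 2| ≤ |κ / 2| * D ^ 2 := by
      rw [abs_mul, abs_pow]
      gcongr
    have habs := abs_sub_abs_le_abs_sub (x g) (κ / 2 * y g ^ 2)
    refine ⟨by linarith, hyg.trans (le_add_of_nonneg_right (by positivity))⟩

end IsShearCocycle

end Shears

/-- An action of `G` on `ℝ^ι` by affine maps, `g` acting as `q ↦ linear g *ᵥ q + translation g`. -/
structure AffineRep (G ι : Type*) [Group G] [Fintype ι] [DecidableEq ι] where
  linear : G →* Matrix ι ι ℝ
  translation : G → ι → ℝ
  translation_mul : ∀ g k, translation (g * k) = linear g *ᵥ translation k + translation g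

namespace AffineRep

variable {G ι : Type*} [Group G] [Fintype ι] [DecidableEq ι] (A : AffineRep G ι)

/-- The affine map by which `g` acts. -/
def act (g : G) (q : ι → ℝ) : ι → ℝ := A.linear g *ᵥ q + A.translation g

lemma act_mul (g k : G) (q : ι → ℝ) : A.act (g * k) q = A.act g (A.act k q) := by
  simp only [act, A.translation_mul, map_mul, mulVec_add, mulVec_mulVec, add_assoc]

lemma translation_one : A.translation 1 = 0 := by
  simpa using A.translation_mul 1 1

lemma act_zero (g : G) : A.act g 0 = A.translation g := by
  rw [act, mulVec_zero, zero_add]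

/-- Properness of the action of `G` as a discrete group: only finitely many elements move a given
point into a given bounded set. -/
def IsProper : Prop := ∀ q D, {g | ‖A.act g q‖ ≤ D}.Finite

/-- The restriction of an affine action to a subgroup. -/
def restrict (K : Subgroup G) : AffineRep K ι where
  linear := A.linear.comp K.subtype
  translation k := A.translation k
  translation_mul g k := A.translation_mul g k

variable {A}

lemma IsProper.restrict (hA : A.IsProper) (K : Subgroup G) : (A.restrict K).IsProper :=
  fun q D => (hA q D).preimage Subtype.val_injective.injOn

lemma IsProper.finite_of_act_eq (hA : A.IsProper) {q : ι → ℝ} (hq : ∀ g, A.act g q = q) :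
    Finite G :=
  Set.finite_univ_iff.1 ((hA q ‖q‖).subset fun g _ => (congrArg norm (hq g)).le)

lemma act_pow_eq {g : G} {q : ι → ℝ} (hq : A.act g q = q) (n : ℕ) : A.act (g ^ n) q = q := by
  induction n with
  | zero => rw [pow_zero, act, A.translation_one, map_one, one_mulVec, add_zero]
  | succ n ih => rw [pow_succ, act_mul, hq, ih]

lemma existsUnique_act_eq {g : G} (hg : (1 - A.linear g).det ≠ 0) : ∃! q, A.act g q = q := by
  have hunit := (isUnit_iff_isUnit_det _).2 hg.isUnit
  have hiff (q : ι → ℝ) : A.act g q = q ↔ (1 - A.linear g) *ᵥ q = A.translation g := by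
    rw [sub_mulVec, one_mulVec, act, sub_eq_iff_eq_add', eq_comm]
  simp only [hiff]
  exact Function.Bijective.existsUnique
    ⟨mulVec_injective_iff_isUnit.2 hunit, mulVec_surjective_iff_isUnit.2 hunit⟩ _

lemma IsProper.isOfFinOrder_of_act_eq (hA : A.IsProper) {g : G} {q : ι → ℝ} (hq : A.act g q = q) :
    IsOfFinOrder g := by
  by_contra hg
  exact Set.infinite_range_of_injective (injective_pow_iff_not_isOfFinOrder.2 hg)
    ((hA q ‖q‖).subset (Set.range_subset_iff.2 fun n => (congrArg norm (act_pow_eq hq n)).le))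

lemma translation_mul_of_mem_ker {g k : G} (hg : A.linear g = 1) :
    A.translation (g * k) = A.translation k + A.translation g := by
  rw [translation_mul, hg, one_mulVec]

/-- The translation part, on the subgroup acting by translations. -/
def translationHom (A : AffineRep G ι) : A.linear.ker →* Multiplicative (ι → ℝ) :=
  MonoidHom.mk' (fun n => .ofAdd (A.translation n)) fun n n' => by
    rw [← ofAdd_add, Subgroup.coe_mul, translation_mul_of_mem_ker n.2, add_comm]

lemma IsProper.virtuallyFreeAbelian_ker (hA : A.IsProper) :
    VirtuallyFreeAbelian (Fintype.card ι) A.linear.ker := by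
  have h := virtuallyFreeAbelian_of_proper A.translationHom fun D =>
    ((hA 0 D).preimage Subtype.val_injective.injOn).subset fun n hn => by
      rwa [Set.mem_preimage, Set.mem_ofPred, A.act_zero]
  rwa [Module.finrank_fintype_fun_eq_card] at h

lemma translation_conj {n : G} (hn : A.linear n = 1) (g : G) :
    A.translation (g * n * g⁻¹) = A.linear g *ᵥ A.translation n := by
  have h := A.translation_mul (g * n * g⁻¹) g
  rw [inv_mul_cancel_right, A.translation_mul, map_mul, map_mul, hn, mul_one, ← map_mul,
    mul_inv_cancel, map_one, one_mulVec, add_comm] at h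
  exact (add_left_cancel h).symm

variable {A : AffineRep G (Fin 2)}

lemma trace_eq_two_of_forall_act_ne {g : G} (hdet : (A.linear g).det = 1)
    (hg : ∀ q, A.act g q ≠ q) : (A.linear g).trace = 2 := by
  by_contra htr
  obtain ⟨q, hq, -⟩ := A.existsUnique_act_eq (g := g) fun h => htr (by
    rw [det_one_sub_eq, hdet] at h
    linarith)
  exact hg q hq

lemma IsProper.abs_trace_le_two (hA : A.IsProper) (hdet : ∀ g, (A.linear g).det = 1) (g : G) :
    |(A.linear g).trace| ≤ 2 := by
  by_cases hg : IsOfFinOrder g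
  · exact abs_trace_le_two_of_isOfFinOrder (hdet g) (A.linear.isOfFinOrder hg)
  · rw [trace_eq_two_of_forall_act_ne (hdet g) fun q hq => hg (hA.isOfFinOrder_of_act_eq hq)]
    norm_num

section Shear

variable {v w : Fin 2 → ℝ}

lemma linear_mulVec_eq_smul_add (hdet : ∀ g, (A.linear g).det = 1)
    (hfix : ∀ g, A.linear g *ᵥ v = v) (hvw : planeArea v w = 1) (g : G) :
    A.linear g *ᵥ w = planeArea (A.linear g *ᵥ w) w • v + w := by
  have h : planeArea v (A.linear g *ᵥ w) = 1 := by
    rw [← hvw, ← planeArea_mulVec (hdet g) v w, hfix]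
  conv_lhs => rw [eq_planeArea_smul_add hvw (A.linear g *ᵥ w), h, one_smul]

lemma isShearCocycle (hdet : ∀ g, (A.linear g).det = 1)
    (hfix : ∀ g, A.linear g *ᵥ v = v) (hvw : planeArea v w = 1) :
    IsShearCocycle (fun g => planeArea (A.linear g *ᵥ w) w) (fun g => planeArea v (A.translation g))
      fun g => planeArea (A.translation g) w where
  slope_mul g k := by
    rw [map_mul, ← mulVec_mulVec, linear_mulVec_eq_smul_add hdet hfix hvw k, mulVec_add,
      mulVec_smul, hfix, planeArea_add_left, planeArea_add_left, planeArea_smul_left, hvw,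
      planeArea_self]
    ring
  height_mul g k := by
    have h := planeArea_mulVec (hdet g) v (A.translation k)
    rw [hfix] at h
    rw [A.translation_mul, planeArea_add_right, h, add_comm]
  width_mul g k := by
    conv_lhs => rw [A.translation_mul, eq_planeArea_smul_add hvw (A.translation k)]
    rw [mulVec_add, mulVec_smul, mulVec_smul, hfix, planeArea_add_left, planeArea_add_left,
      planeArea_smul_left, planeArea_smul_left, hvw]
    ring

lemma IsProper.virtuallyFreeAbelian_of_linear_fix (hA : A.IsProper)
    (hdet : ∀ g, (A.linear g).det = 1) (hv : v ≠ 0) (hfix : ∀ g, A.linear g *ᵥ v = v) :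
    VirtuallyFreeAbelian 2 G := by
  obtain ⟨w, hvw⟩ := exists_planeArea_eq_one hv
  refine (A.isShearCocycle hdet hfix hvw).virtuallyFreeAbelian fun D =>
    (hA 0 (D * ‖v‖ + D * ‖w‖)).subset fun g ⟨hx, hy⟩ => ?_
  rw [Set.mem_ofPred, A.act_zero, eq_planeArea_smul_add hvw (A.translation g)]
  refine (norm_add_le _ _).trans ?_
  rw [norm_smul, norm_smul]
  exact add_le_add (mul_le_mul_of_nonneg_right hx (norm_nonneg _))
    (mul_le_mul_of_nonneg_right hy (norm_nonneg _))

end Shear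

end AffineRep

lemma exists_finiteIndex_mulVec_eq_self {G ι : Type*} [Group G] [Fintype ι] [DecidableEq ι]
    (B : G →* Matrix ι ι ℝ) {v : ι → ℝ} (hv : ∀ g, B g *ᵥ v = v ∨ B g *ᵥ v = -v) :
    ∃ K : Subgroup G, K.FiniteIndex ∧ ∀ g ∈ K, B g *ᵥ v = v := by
  let K : Subgroup G :=
    { carrier := {g | B g *ᵥ v = v}
      mul_mem' := fun {g k} hg hk => by
        rw [Set.mem_ofPred, map_mul, ← mulVec_mulVec, hk, hg]
      one_mem' := by rw [Set.mem_ofPred, map_one, one_mulVec]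
      inv_mem' := fun {g} hg => by
        rw [Set.mem_ofPred]
        nth_rw 1 [← hg]
        rw [mulVec_mulVec, ← map_mul, inv_mul_cancel, map_one, one_mulVec] }
  refine ⟨K, ?_, fun g hg => hg⟩
  by_cases hK : ∀ g, g ∈ K
  · rw [(Subgroup.eq_top_iff' K).2 hK]
    infer_instance
  obtain ⟨g₀, hg₀⟩ := not_forall.1 hK
  have hg₀ : B g₀ *ᵥ v = -v := (hv g₀).resolve_left hg₀
  refine finiteIndex_of_finite_cover (Set.toFinite {1, g₀}) fun g => ?_
  rcases hv g with hg | hg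
  · exact ⟨1, by simp, by rw [inv_one, one_mul]; exact hg⟩
  · refine ⟨g₀, by simp, ?_⟩
    change B (g₀⁻¹ * g) *ᵥ v = v
    rw [map_mul, ← mulVec_mulVec, hg, ← hg₀, mulVec_mulVec, ← map_mul, inv_mul_cancel, map_one,
      one_mulVec]

lemma commute_of_abs_trace_lt_two {G : Type*} [Group G] {B : G →* Matrix (Fin 2) (Fin 2) ℝ}
    (hdet : ∀ g, (B g).det = 1) (htr : ∀ g, |(B g).trace| ≤ 2) {u : G} (hu : |(B u).trace| < 2)
    (g : G) : Commute (B u) (B g) := by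
  have hinv (g : G) : (B g)⁻¹ = B g⁻¹ :=
    inv_eq_right_inv (by rw [← map_mul, mul_inv_cancel, map_one])
  refine commute_of_trace_commutator_le_two (hdet u) (hdet g) hu ?_
  rw [hinv, hinv, ← map_mul, ← map_mul, ← map_mul]
  exact (abs_le.1 (htr _)).2

lemma eq_zero_of_isMulTorsion {G : Type*} [Group G] (hG : IsMulTorsion G) {f : G → ℝ}
    (hf : ∀ g h, f (g * h) = f g + f h) (g : G) : f g = 0 := by
  obtain ⟨n, hn, hgn⟩ := isOfFinOrder_iff_pow_eq_one.1 (hG g)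
  have h := apply_zpow_eq_mul hf g n
  have h1 := apply_zpow_eq_mul hf g 0
  rw [zpow_natCast, hgn, ← _root_.zpow_zero g, h1] at h
  simpa [hn.ne'] using h.symm

namespace AffineRep

variable {G ι : Type*} [Group G] [Fintype ι] [DecidableEq ι]

lemma act_eq_of_linear_eq {A : AffineRep G ι} (hker : ∀ n, A.linear n = 1 → A.translation n = 0)
    {g k : G} (h : A.linear g = A.linear k) (q : ι → ℝ) : A.act g q = A.act k q := by
  have hlin : A.linear (g * k⁻¹) = 1 := by rw [map_mul, h, ← map_mul, mul_inv_cancel, map_one]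
  rw [← inv_mul_cancel_right g k, act_mul, act, hlin, one_mulVec, hker _ hlin, add_zero]

variable {A : AffineRep G (Fin 2)} {u : G}

lemma exists_forall_act_eq_of_elliptic (hdet : ∀ g, (A.linear g).det = 1)
    (htr : ∀ g, |(A.linear g).trace| ≤ 2) (hu : |(A.linear u).trace| < 2)
    (hker : ∀ n, A.linear n = 1 → A.translation n = 0) : ∃ q, ∀ g, A.act g q = q := by
  obtain ⟨q, hq, huniq⟩ := A.existsUnique_act_eq (g := u) (by
    rw [det_one_sub_eq, hdet]
    linarith [(abs_lt.1 hu).2])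
  refine ⟨q, fun g => huniq _ ?_⟩
  have hcomm : A.linear (u * g) = A.linear (g * u) := by
    rw [map_mul, map_mul, (commute_of_abs_trace_lt_two hdet htr hu g).eq]
  change A.act u (A.act g q) = A.act g q
  rw [← act_mul, act_eq_of_linear_eq hker hcomm, act_mul, hq]

-- The conjugates of a translation `n` are translations by the vectors `A.linear g *ᵥ s`, which all
-- lie on one ellipse.
lemma IsProper.finiteIndex_ker_linear (hA : A.IsProper) (hdet : ∀ g, (A.linear g).det = 1)
    (hu : |(A.linear u).trace| < 2) {n : G} (hn : A.linear n = 1) (hs : A.translation n ≠ 0) :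
    A.linear.ker.FiniteIndex := by
  have hcomm (g : G) : Commute (A.linear u) (A.linear g) :=
    commute_of_abs_trace_lt_two hdet (hA.abs_trace_le_two hdet) hu g
  obtain ⟨C, hC⟩ := exists_norm_le_sqrt_ellipticForm (hdet u) hu
  have horbit : {x | ∃ g, A.linear g *ᵥ A.translation n = x}.Finite := by
    refine ((hA 0 √(C * |ellipticForm (A.linear u) (A.translation n)|)).image
      A.translation).subset ?_
    rintro _ ⟨g, rfl⟩
    refine ⟨g * n * g⁻¹, ?_, translation_conj hn g⟩
    rw [Set.mem_ofPred, act_zero, translation_conj hn]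
    exact ellipticForm_mulVec (hdet g) (hcomm g) (A.translation n) ▸ hC _
  refine finiteIndex_ker_of_finite_range _ (Set.Finite.of_finite_image
    (f := (· *ᵥ A.translation n)) (horbit.subset ?_) ?_)
  · rintro _ ⟨_, ⟨g, rfl⟩, rfl⟩
    exact ⟨g, rfl⟩
  · rintro _ ⟨g, rfl⟩ _ ⟨k, rfl⟩ h
    exact eq_of_mulVec_eq_of_commute (hdet u) hu (hcomm g) (hcomm k) hs h

lemma IsProper.virtuallyFreeAbelian (hA : A.IsProper) (hdet : ∀ g, (A.linear g).det = 1) :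
    VirtuallyFreeAbelian 2 G := by
  have htr := hA.abs_trace_le_two hdet
  rcases exists_eigenvector_or_elliptic hdet htr with ⟨v, hv, hpm⟩ | ⟨u, hu⟩
  · obtain ⟨K, hK, hfix⟩ := exists_finiteIndex_mulVec_eq_self A.linear hpm
    exact .of_subgroup K ((hA.restrict K).virtuallyFreeAbelian_of_linear_fix (fun g => hdet g) hv
      fun g => hfix g g.2)
  · by_cases hker : ∀ n, A.linear n = 1 → A.translation n = 0
    · obtain ⟨q, hq⟩ := exists_forall_act_eq_of_elliptic hdet htr hu hker
      have := hA.finite_of_act_eq hq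
      simpa using virtuallyFreeAbelian_of_proper (1 : G →* Multiplicative (Fin 2 → ℝ))
        fun D => Set.toFinite _
    · push Not at hker
      obtain ⟨n, hn, hs⟩ := hker
      have := hA.finiteIndex_ker_linear hdet hu hn hs
      exact .of_subgroup _ hA.virtuallyFreeAbelian_ker

lemma translation_eq_zero_of_isMulTorsion (hG : IsMulTorsion G)
    (hdet : ∀ g, (A.linear g).det = 1) {v : Fin 2 → ℝ} (hv : v ≠ 0)
    (hfix : ∀ g, A.linear g *ᵥ v = v) (g : G) : A.translation g = 0 := by
  obtain ⟨w, hvw⟩ := exists_planeArea_eq_one hv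
  have h := A.isShearCocycle hdet hfix hvw
  have hy := eq_zero_of_isMulTorsion hG (f := fun g => planeArea v (A.translation g)) h.height_mul
  have hx := eq_zero_of_isMulTorsion hG (f := fun g => planeArea (A.translation g) w)
    fun g k => by rw [h.width_mul, hy, mul_zero, add_zero]
  rw [eq_planeArea_smul_add hvw (A.translation g), hx, hy, zero_smul, zero_smul, add_zero]

lemma exists_finiteIndex_act_eq_of_isMulTorsion (hG : IsMulTorsion G)
    (hdet : ∀ g, (A.linear g).det = 1) :
    ∃ K : Subgroup G, K.FiniteIndex ∧ ∃ q, ∀ g ∈ K, A.act g q = q := by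
  have htr (g : G) : |(A.linear g).trace| ≤ 2 :=
    abs_trace_le_two_of_isOfFinOrder (hdet g) (A.linear.isOfFinOrder (hG g))
  rcases exists_eigenvector_or_elliptic hdet htr with ⟨v, hv, hpm⟩ | ⟨u, hu⟩
  · obtain ⟨K, hK, hfix⟩ := exists_finiteIndex_mulVec_eq_self A.linear hpm
    refine ⟨K, hK, 0, fun g hg => ?_⟩
    rw [act_zero]
    exact (A.restrict K).translation_eq_zero_of_isMulTorsion (hG.subgroup K) (fun g => hdet g) hv
      (fun g => hfix g g.2) ⟨g, hg⟩
  · have hker (n : G) (hn : A.linear n = 1) : A.translation n = 0 := funext fun i =>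
      eq_zero_of_isMulTorsion (hG.subgroup A.linear.ker) (f := fun n => A.translation n i)
        (fun n n' => by
          rw [Subgroup.coe_mul, translation_mul_of_mem_ker n.2, Pi.add_apply, add_comm]) ⟨n, hn⟩
    obtain ⟨q, hq⟩ := exists_forall_act_eq_of_elliptic hdet htr hu hker
    exact ⟨⊤, inferInstance, q, fun g _ => hq g⟩

end AffineRep

namespace IsCornerDominated

variable {G : Type*} [Group G] {m : G →* Matrix (Fin 4) (Fin 4) ℝ}

/-- The affine action on the plane that `m` induces on the slice `x₃ = 1` of `ℝ⁴ / ℝ e₀`. -/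
def affineRep (hm : IsCornerDominated 0 3 m) (hq : ∀ g, m g 3 3 = 1) : AffineRep G (Fin 2) where
  linear :=
    { toFun g := !![m g 1 1, m g 1 2; m g 2 1, m g 2 2]
      map_one' := by simp [one_fin_two]
      map_mul' g h := by
        have hcol := hm.col_eq_zero g
        have hrow := hm.row_eq_zero h
        simp [Matrix.mul_apply, Fin.sum_univ_succ, hcol, hrow] }
  translation g := ![m g 1 3, m g 2 3]
  translation_mul g h := by
    have hcol := hm.col_eq_zero g
    ext i
    fin_cases i <;>
      simp [Matrix.mul_apply, Fin.sum_univ_succ, hcol, hq, mul_comm, add_assoc]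

variable {hm : IsCornerDominated 0 3 m} {hq : ∀ g, m g 3 3 = 1}

lemma det_affineRep_linear (hp : ∀ g, m g 0 0 = 1) (hdet : ∀ g, (m g).det = 1) (g : G) :
    ((hm.affineRep hq).linear g).det = 1 := by
  have hcol := hm.col_eq_zero g
  have hrow := hm.row_eq_zero g
  rw [← hdet g, det_succ_column_zero (m g)]
  simp [affineRep, det_fin_two, det_fin_three, Fin.sum_univ_succ, hcol, hrow, hp, hq, Fin.succAbove]

lemma mulVec_eq_affineRep_act (g : G) (v : Fin 2 → ℝ) {i : Fin 4} (hi : i ≠ 0) :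
    (m g *ᵥ ![0, v 0, v 1, 1]) i =
      ![0, (hm.affineRep hq).act g v 0, (hm.affineRep hq).act g v 1, 1] i := by
  have hrow := hm.row_eq_zero g
  fin_cases i
  · exact absurd rfl hi
  all_goals simp [affineRep, AffineRep.act, Matrix.mulVec, dotProduct, Fin.sum_univ_succ, hrow, hq,
    add_assoc]

lemma affineRep_isProper
    (hfin : ∀ w : Fin 4 → ℝ, w 3 ≠ 0 → ∀ D, {g | ∀ i ≠ 0, |(m g *ᵥ w) i| ≤ D}.Finite) :
    (hm.affineRep hq).IsProper := fun v D => by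
  refine (hfin ![0, v 0, v 1, 1] one_ne_zero (max D 1)).subset fun g hg i hi => ?_
  have hcoord (j : Fin 2) : |(hm.affineRep hq).act g v j| ≤ D := (norm_le_pi_norm _ j).trans hg
  rw [mulVec_eq_affineRep_act (hm := hm) (hq := hq) g v hi]
  fin_cases i
  · exact absurd rfl hi
  · exact le_max_of_le_left (hcoord 0)
  · exact le_max_of_le_left (hcoord 1)
  · simp

lemma virtuallyFreeAbelian_of_isMulTorsion (hm : IsCornerDominated 0 3 m)
    (hp : ∀ g, m g 0 0 = 1) (hq : ∀ g, m g 3 3 = 1) (hdet : ∀ g, (m g).det = 1)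
    (hG : IsMulTorsion G) : VirtuallyFreeAbelian 1 G := by
  obtain ⟨K, hK, v, hv⟩ := AffineRep.exists_finiteIndex_act_eq_of_isMulTorsion hG
    (det_affineRep_linear (hm := hm) (hq := hq) hp hdet)
  refine .of_subgroup K ((hm.restrict K).virtuallyFreeAbelian_of_fixed (fun g => hp g)
    (w := ![0, v 0, v 1, 1]) one_ne_zero fun g i hi => ?_)
  exact (mulVec_eq_affineRep_act (hm := hm) (hq := hq) (g : G) v hi).trans (by rw [hv g g.2])

lemma virtuallyFreeAbelian_of_corners_eq_one (hm : IsCornerDominated 0 3 m)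
    (hp : ∀ g, m g 0 0 = 1) (hq : ∀ g, m g 3 3 = 1) (hdet : ∀ g, (m g).det = 1) :
    VirtuallyFreeAbelian 2 G := by
  by_cases hG : IsMulTorsion G
  · exact (hm.virtuallyFreeAbelian_of_isMulTorsion hp hq hdet hG).mono one_le_two
  · obtain ⟨h, hh⟩ := not_forall.1 hG
    rcases hm.virtuallyFreeAbelian_or_finite_abs_mulVec_le (by decide) hp hq hh with hvz | hfin
    · exact hvz.mono one_le_two
    · exact (affineRep_isProper (hm := hm) (hq := hq) hfin).virtuallyFreeAbelian
        (det_affineRep_linear hp hdet)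

theorem virtuallyFreeAbelian (hm : IsCornerDominated 0 3 m) (hdet : ∀ g, (m g).det = 1) :
    VirtuallyFreeAbelian 2 G := by
  obtain ⟨K, hK, hcorner⟩ := hm.exists_finiteIndex_corners_eq_one
  exact .of_subgroup K ((hm.restrict K).virtuallyFreeAbelian_of_corners_eq_one
    (fun g => (hcorner g g.2).1) (fun g => (hcorner g g.2).2) fun g => hdet g)

end IsCornerDominated

section ConvergenceDynamics

variable {Γ M : Type} [Group Γ] [MulAction Γ M]

lemma pow_succ_smul_mem {γ : Γ} {U V : Set M} (hUV : Disjoint U V) (hγ : ∀ z ∉ V, γ • z ∈ U)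
    (n : ℕ) {z : M} (hz : z ∉ V) : γ ^ (n + 1) • z ∈ U := by
  induction n generalizing z with
  | zero => simpa using hγ z hz
  | succ n ih =>
    rw [pow_succ, mul_smul]
    exact ih (Set.disjoint_left.1 hUV (hγ z hz))

lemma not_isOfFinOrder_of_smul_mem {γ : Γ} {U V : Set M} (hUV : Disjoint U V)
    (hγ : ∀ z ∉ V, γ • z ∈ U) {y : M} (hyU : y ∉ U) (hyV : y ∉ V) : ¬IsOfFinOrder γ := by
  rw [isOfFinOrder_iff_pow_eq_one]
  rintro ⟨n, hn, hpow⟩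
  obtain ⟨k, rfl⟩ := Nat.exists_eq_add_one_of_ne_zero hn.ne'
  exact hyU (by simpa only [hpow, one_smul] using pow_succ_smul_mem hUV hγ k hyV)

variable [TopologicalSpace M]

namespace ConvLocUnif

variable {g : ℕ → Γ} {a b x z : M}

lemma tendsto (h : ConvLocUnif g a b) (hz : z ≠ b) :
    Tendsto (fun n => g n • z) atTop (𝓝 a) := fun U hU =>
  (h {z} isCompact_singleton hz.symm U hU).mono fun _ hn => hn z rfl

lemma comp (h : ConvLocUnif g a b) {φ : ℕ → ℕ} (hφ : Tendsto φ atTop atTop) :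
    ConvLocUnif (g ∘ φ) a b :=
  fun K hK hb U hU => hφ.eventually (h K hK hb U hU)

lemma of_subseq (h : ∀ ψ : ℕ → ℕ, StrictMono ψ → ∃ φ : ℕ → ℕ, ConvLocUnif (g ∘ ψ ∘ φ) a b) :
    ConvLocUnif g a b := by
  intro K hK hbK U hU
  by_contra hne
  obtain ⟨ψ, hψ, hout⟩ := extraction_of_frequently_atTop (not_eventually.1 hne)
  obtain ⟨φ, hφ⟩ := h ψ hψ
  obtain ⟨n, hn⟩ := (hφ K hK hbK U hU).exists
  exact hout _ hn

lemma inv [CompactSpace M] [T2Space M] (h : ConvLocUnif g a b) :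
    ConvLocUnif (fun n => (g n)⁻¹) b a := by
  intro K hK ha U hU
  have hcompl := h (interior U)ᶜ isOpen_interior.isClosed_compl.isCompact
    (not_not.2 (mem_interior_iff_mem_nhds.2 hU)) Kᶜ (hK.isClosed.isOpen_compl.mem_nhds ha)
  filter_upwards [hcompl] with n hn z hz
  by_contra hzU
  exact hn ((g n)⁻¹ • z) (fun h => hzU (interior_subset h)) (by rwa [smul_inv_smul])

lemma eq_of_smul_eq [T2Space M] (h : ConvLocUnif g a b) (hx : ∀ n, g n • x = x) (hb : b ≠ x) :
    a = x :=
  tendsto_nhds_unique (h.tendsto hb.symm) (by simp only [hx, tendsto_const_nhds])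

end ConvLocUnif

lemma exists_ne_ne [T1Space M] {x : M} [NeBot (𝓝[≠] x)] {b : M} (hb : b ≠ x) :
    ∃ y, y ≠ b ∧ y ≠ x :=
  ((eventually_mem_nhdsWithin (a := x)).and
    (eventually_ne_nhdsWithin (s := {x}ᶜ) hb.symm)).exists.imp fun _ hy => hy.symm

/-- `γ` is loxodromic with attracting fixed point `x` and repelling fixed point `b`. -/
structure IsLoxodromic (γ : Γ) (x b : M) : Prop where
  ne : b ≠ x
  smul_attracting : γ • x = x
  smul_repelling : γ • b = b
  convLocUnif : ConvLocUnif (γ ^ · : ℕ → Γ) x b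

namespace IsLoxodromic

variable {γ h : Γ} {x b : M}

lemma pow_smul_attracting (hγ : IsLoxodromic γ x b) (n : ℕ) : γ ^ n • x = x :=
  pow_mem (S := MulAction.stabilizer Γ x) hγ.smul_attracting n

lemma pow_smul_repelling (hγ : IsLoxodromic γ x b) (n : ℕ) : γ ^ n • b = b :=
  pow_mem (S := MulAction.stabilizer Γ b) hγ.smul_repelling n

lemma tendsto_smul_pow_smul (hconv : IsConvergenceAction Γ M) (hγ : IsLoxodromic γ x b)
    (hx : h • x = x) {y : M} (hyb : y ≠ b) (hyx : y ≠ x) :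
    Tendsto (fun n : ℕ => h • γ ^ n • y) atTop (𝓝[≠] x) := by
  refine tendsto_nhdsWithin_iff.2 ⟨?_, .of_forall fun n hn => hyx ?_⟩
  · simpa only [Function.comp_def, hx] using
      ((hconv.1 h).tendsto x).comp (hγ.convLocUnif.tendsto hyb)
  · refine smul_left_cancel (h * γ ^ n) ?_
    rw [mul_smul, mul_smul, hγ.pow_smul_attracting, hx]
    exact hn

lemma tendsto_atTop_of_eventually_pow_inv_smul_mem (hconv : IsConvergenceAction Γ M)
    (hγ : IsLoxodromic γ x b) {C : Set M} (hC : IsClosed C) (hxC : x ∉ C) {z : ℕ → M}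
    (hz : Tendsto z atTop (𝓝 x)) {k : ℕ → ℕ} (hk : ∀ᶠ n in atTop, (γ ^ k n)⁻¹ • z n ∈ C) :
    Tendsto k atTop atTop := by
  suffices Tendsto k atTop cofinite by rwa [Nat.cofinite_eq_atTop] at this
  refine le_cofinite_iff_eventually_ne.2 fun i => eventually_map.2 ?_
  have hlim := ((hconv.1 (γ ^ i)⁻¹).tendsto x).comp hz
  rw [inv_smul_eq_iff.2 (hγ.pow_smul_attracting i).symm] at hlim
  filter_upwards [hk, hlim.eventually (hC.isOpen_compl.mem_nhds hxC)] with n hn hni h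
  exact hni (h ▸ hn)

end IsLoxodromic

variable [T2Space M]

namespace IsConvergenceAction

lemma smul_eq_of_convLocUnif_pow [CompactSpace M] (hconv : IsConvergenceAction Γ M) {γ : Γ}
    {x b : M} (hx : γ • x = x) (hb : b ≠ x) {φ : ℕ → ℕ}
    (h : ConvLocUnif (fun n => γ ^ φ n) x b) : γ • b = b := by
  have hne : γ⁻¹ • b ≠ x := fun hbx => hb (by rwa [inv_smul_eq_iff, hx] at hbx)
  have hlim := ((hconv.1 γ⁻¹).tendsto b).comp (h.inv.tendsto hb)
  refine (inv_smul_eq_iff.1 (tendsto_nhds_unique hlim ((h.inv.tendsto hne).congr fun n => ?_))).symm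
  simp only [Function.comp_apply, smul_smul]
  exact congrArg (· • b) ((Commute.refl γ).pow_left _).inv_inv.eq

lemma ne_of_convLocUnif_pow [CompactSpace M] {γ : Γ} {U V : Set M}
    (hUV : Disjoint (closure U) (closure V)) (hγ : ∀ z ∉ V, γ • z ∈ U) {b x y : M} (hb : b ∈ V)
    (hx : x ∈ U) (hyx : y ≠ x) (hyV : y ∉ V) {φ : ℕ → ℕ} (hφ : Tendsto φ atTop atTop) {a' b' : M}
    (h : ConvLocUnif (fun n => γ ^ φ n) a' b') : b' ≠ x := by
  rintro rfl
  have hdisj := hUV.mono subset_closure subset_closure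
  have hpow {z : M} (hz : z ∉ V) : ∀ᶠ n in atTop, γ ^ φ n • z ∈ U := by
    filter_upwards [hφ.eventually_ge_atTop 1] with n hn
    obtain ⟨k, hk⟩ := Nat.exists_eq_add_of_le' hn
    exact hk ▸ pow_succ_smul_mem hdisj hγ k hz
  have ha' : a' ∈ closure U := mem_closure_of_tendsto (h.tendsto hyx) (hpow hyV)
  have hba' : b ≠ a' := fun hba => Set.disjoint_left.1 hUV ha' (hba ▸ subset_closure hb)
  have hb' : b' ∈ closure V := by
    refine mem_closure_of_tendsto (h.inv.tendsto hba') ?_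
    filter_upwards [hφ.eventually_ge_atTop 1] with n hn
    by_contra hn'
    obtain ⟨k, hk⟩ := Nat.exists_eq_add_of_le' hn
    rw [hk] at hn'
    have hbU := pow_succ_smul_mem hdisj hγ k hn'
    rw [smul_inv_smul] at hbU
    exact Set.disjoint_left.1 hdisj hbU hb
  exact Set.disjoint_left.1 hUV (subset_closure hx) hb'

lemma exists_isLoxodromic [CompactSpace M] (hconv : IsConvergenceAction Γ M) {x b : M}
    [NeBot (𝓝[≠] x)] {g : ℕ → Γ} (hgx : ∀ n, g n • x = x) (hg : ConvLocUnif g x b) (hb : b ≠ x) :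
    ∃ γ : Γ, ∃ b', IsLoxodromic γ x b' := by
  obtain ⟨y, hyb, hyx⟩ := exists_ne_ne hb
  obtain ⟨U, hxU, hU, V, hbV, hV, hUV⟩ := exists_open_nhds_disjoint_closure hb.symm
  replace hUV : Disjoint (closure (U \ {y})) (closure (V \ {y})) :=
    hUV.mono (closure_mono Set.sdiff_subset) (closure_mono Set.sdiff_subset)
  replace hxU : x ∈ U \ {y} := ⟨hxU, hyx.symm⟩
  replace hbV : b ∈ V \ {y} := ⟨hbV, hyb.symm⟩
  have hyV : y ∉ V \ {y} := fun h => h.2 rfl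
  obtain ⟨n, hn⟩ := (hg (V \ {y})ᶜ (hV.sdiff isClosed_singleton).isClosed_compl.isCompact
    (not_not.2 hbV) _ ((hU.sdiff isClosed_singleton).mem_nhds hxU)).exists
  have hinf : ¬IsOfFinOrder (g n) := not_isOfFinOrder_of_smul_mem
    (hUV.mono subset_closure subset_closure) hn (fun h => h.2 rfl) hyV
  have hsub (ψ : ℕ → ℕ) (hψ : StrictMono ψ) : ∃ φ : ℕ → ℕ, ∃ b', b' ≠ x ∧ g n • b' = b' ∧
      ConvLocUnif (fun k => g n ^ ψ (φ k)) x b' := by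
    obtain ⟨φ, hφ, a', b', hab⟩ := hconv.2 (fun k => g n ^ ψ k)
      ((injective_pow_iff_not_isOfFinOrder.2 hinf).comp hψ.injective)
    have hb' := ne_of_convLocUnif_pow hUV hn hbV hxU hyx hyV (hψ.comp hφ).tendsto_atTop hab
    obtain rfl := hab.eq_of_smul_eq
      (fun k => pow_mem (S := MulAction.stabilizer Γ x) (hgx n) _) hb'
    exact ⟨φ, b', hb', hconv.smul_eq_of_convLocUnif_pow (hgx n) hb' hab, hab⟩
  obtain ⟨φ, b', hb', hfix, -⟩ := hsub id strictMono_id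
  refine ⟨g n, b', hb', hgx n, hfix, .of_subseq fun ψ hψ => ?_⟩
  obtain ⟨φ', b'', -, -, hlim⟩ := hsub ψ hψ
  have hb : b'' = b' := by
    by_contra hne
    exact hb' (hlim.eq_of_smul_eq
      (fun k => pow_mem (S := MulAction.stabilizer Γ b') hfix _) hne).symm
  exact ⟨φ', hb ▸ hlim⟩

lemma finite_setOf_smul_mem (hconv : IsConvergenceAction Γ M) {x b y : M} (hbx : b ≠ x)
    (hyx : y ≠ x) (hyb : y ≠ b) {B C : Set M} (hB : IsClosed B) (hC : IsClosed C) (hxB : x ∉ B)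
    (hxC : x ∉ C) (hBC : Disjoint B C) :
    {k : Γ | k • x = x ∧ k • b ∈ B ∧ k • y ∈ C}.Finite := by
  by_contra hinf
  let k := Set.Infinite.natEmbedding _ hinf
  obtain ⟨φ, -, a, c, hac⟩ := hconv.2 (fun n => (k n : Γ))
    (Subtype.val_injective.comp k.injective)
  have haB (h : b ≠ c) : a ∈ B :=
    hB.mem_of_tendsto (hac.tendsto h) (.of_forall fun n => (k _).2.2.1)
  have haC (h : y ≠ c) : a ∈ C :=
    hC.mem_of_tendsto (hac.tendsto h) (.of_forall fun n => (k _).2.2.2)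
  by_cases hc : c = x
  · exact Set.disjoint_left.1 hBC (haB (hc ▸ hbx)) (haC (hc ▸ hyx))
  obtain rfl := hac.eq_of_smul_eq (fun n => (k _).2.1) hc
  exact hyb ((not_not.1 fun h => hxC (haC h)).trans (not_not.1 fun h => hxB (haB h)).symm)

lemma eventually_smul_eq (hconv : IsConvergenceAction Γ M) {x b y : M} (hbx : b ≠ x)
    (hyx : y ≠ x) (hyb : y ≠ b) {C : Set M} (hC : IsClosed C) (hxC : x ∉ C) (hbC : b ∉ C)
    [RegularSpace M] {f : ℕ → Γ} (hfx : ∀ n, f n • x = x)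
    (hfb : Tendsto (fun n => f n • b) atTop (𝓝 b)) (hfy : ∀ᶠ n in atTop, f n • y ∈ C) :
    ∀ᶠ n in atTop, f n • b = b := by
  obtain ⟨B, hB, hBclosed, hBC⟩ := exists_mem_nhds_isClosed_subset
    ((hC.union (isClosed_singleton (x := x))).isOpen_compl.mem_nhds
      (not_or.2 ⟨hbC, hbx⟩ : b ∈ (C ∪ {x})ᶜ))
  have hfin := hconv.finite_setOf_smul_mem hbx hyx hyb hBclosed hC
    (fun hxB => hBC hxB (.inr rfl)) hxC
    (Set.disjoint_left.2 fun z hzB hzC => hBC hzB (.inl hzC))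
  have hmoved : ((· • b) '' {k : Γ | k • x = x ∧ k • b ∈ B ∧ k • y ∈ C} \ {b}).Finite :=
    (hfin.image _).sdiff
  filter_upwards [hfb.eventually (hmoved.isClosed.isOpen_compl.mem_nhds fun hb => hb.2 rfl),
    hfb.eventually hB, hfy] with n hn hnB hnC
  by_contra hne
  exact hn ⟨⟨f n, ⟨hfx n, hnB, hnC⟩, rfl⟩, hne⟩

end IsConvergenceAction

namespace IsLoxodromic

variable {γ h : Γ} {x b : M}

lemma exists_isClosed_forall_exists_pow_inv_smul_mem [CompactSpace M]
    (hconv : IsConvergenceAction Γ M) (hγ : IsLoxodromic γ x b) :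
    ∃ C : Set M, IsClosed C ∧ x ∉ C ∧ b ∉ C ∧
      ∀ᶠ z in 𝓝[≠] x, ∃ n : ℕ, (γ ^ n)⁻¹ • z ∈ C := by
  obtain ⟨U, hxU, hU, V, hbV, -, hUV⟩ := exists_open_nhds_disjoint_closure hγ.ne.symm
  have hbU : b ∉ closure U := fun hb => Set.disjoint_left.1 hUV hb (subset_closure hbV)
  refine ⟨Uᶜ ∩ (γ • ·) ⁻¹' closure U,
    hU.isClosed_compl.inter (isClosed_closure.preimage (hconv.1 γ)), fun h => h.1 hxU,
    fun h => hbU (hγ.smul_repelling ▸ h.2), ?_⟩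
  filter_upwards [self_mem_nhdsWithin, mem_nhdsWithin_of_mem_nhds (hU.mem_nhds hxU)] with z hzx hzU
  have hexit : ∃ n : ℕ, (γ ^ n)⁻¹ • z ∉ U :=
    ((hγ.convLocUnif.inv.tendsto hzx).eventually
      (isClosed_closure.isOpen_compl.mem_nhds hbU)).exists.imp fun n hn h => hn (subset_closure h)
  obtain ⟨n, hn, hn'⟩ := Nat.exists_not_and_succ_of_not_zero_of_exists
    (p := fun n => (γ ^ n)⁻¹ • z ∉ U) (by simpa using hzU) hexit
  refine ⟨n + 1, hn', subset_closure ?_⟩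
  change γ • (γ ^ (n + 1))⁻¹ • z ∈ U
  rw [smul_smul, pow_succ, _root_.mul_inv_rev, mul_inv_cancel_left]
  exact not_not.1 hn

-- Some `γ ^ (-k n) * h * γ ^ n` takes a third point into a fundamental domain of `γ`. There are
-- only finitely many such elements, but they would move `b` by arbitrarily small nonzero amounts.
lemma smul_repelling_eq [CompactSpace M] (hconv : IsConvergenceAction Γ M)
    [NeBot (𝓝[≠] x)] (hγ : IsLoxodromic γ x b) (hx : h • x = x) : h • b = b := by
  by_contra hb
  obtain ⟨y, hyb, hyx⟩ := exists_ne_ne hγ.ne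
  obtain ⟨C, hC, hxC, hbC, hdom⟩ := hγ.exists_isClosed_forall_exists_pow_inv_smul_mem hconv
  have hlim := hγ.tendsto_smul_pow_smul hconv hx hyb hyx
  obtain ⟨k, hk⟩ := (hlim.eventually hdom).choice
  have hk_tendsto := hγ.tendsto_atTop_of_eventually_pow_inv_smul_mem hconv hC hxC
    (tendsto_nhds_of_tendsto_nhdsWithin hlim) hk
  let f (n : ℕ) : Γ := (γ ^ k n)⁻¹ * h * γ ^ n
  have hfx (n : ℕ) : f n • x = x := by
    rw [mul_smul, mul_smul, hγ.pow_smul_attracting, hx, inv_smul_eq_iff, hγ.pow_smul_attracting]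
  have hfb (n : ℕ) : f n • b = (γ ^ k n)⁻¹ • h • b := by
    rw [mul_smul, mul_smul, hγ.pow_smul_repelling]
  have hfb_tendsto : Tendsto (fun n => f n • b) atTop (𝓝 b) := by
    simp only [hfb]
    exact (hγ.convLocUnif.inv.comp hk_tendsto).tendsto fun hbx =>
      hγ.ne (smul_left_cancel h (hbx.trans hx.symm))
  have hfy : ∀ᶠ n in atTop, f n • y ∈ C := hk.mono fun n hn => by rwa [mul_smul, mul_smul]
  obtain ⟨n, hn⟩ :=
    (hconv.eventually_smul_eq hγ.ne hyx hyb hC hxC hbC hfx hfb_tendsto hfy).exists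
  exact hb (by rwa [hfb, inv_smul_eq_iff, hγ.pow_smul_repelling] at hn)

end IsLoxodromic

namespace IsConvergenceAction

variable [CompactSpace M] {x : M} [NeBot (𝓝[≠] x)] {g : ℕ → Γ}

lemma eq_of_convLocUnif (hconv : IsConvergenceAction Γ M)
    (hfix : ∀ y : M, (∀ γ ∈ MulAction.stabilizer Γ x, γ • y = y) → y = x)
    (hgx : ∀ n, g n • x = x) {b : M} (hg : ConvLocUnif g x b) : b = x := by
  by_contra hb
  obtain ⟨γ, b', hγ⟩ := hconv.exists_isLoxodromic hgx hg hb
  exact hγ.ne (hfix b' fun _ hk => hγ.smul_repelling_eq hconv hk)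

lemma exists_subseq_convLocUnif_self (hconv : IsConvergenceAction Γ M)
    (hfix : ∀ y : M, (∀ γ ∈ MulAction.stabilizer Γ x, γ • y = y) → y = x)
    (hgx : ∀ n, g n • x = x) (hg : Function.Injective g) :
    ∃ φ : ℕ → ℕ, StrictMono φ ∧ ConvLocUnif (fun n => g (φ n)) x x := by
  obtain ⟨φ, hφ, a, b, hab⟩ := hconv.2 g hg
  refine ⟨φ, hφ, ?_⟩
  by_cases hb : b = x
  · subst hb
    obtain rfl := hconv.eq_of_convLocUnif hfix (fun n => inv_smul_eq_iff.2 (hgx (φ n)).symm) hab.inv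
    exact hab
  · obtain rfl := hab.eq_of_smul_eq (fun n => hgx _) hb
    exact absurd (hconv.eq_of_convLocUnif hfix (fun n => hgx (φ n)) hab) hb

end IsConvergenceAction

end ConvergenceDynamics

section MatrixLimits

variable {ι : Type*}

lemma tendsto_cofinite_of_subseq {α β : Type*} {f : α → β} {l : Filter β}
    (hf : ∀ a : ℕ → α, Function.Injective a →
      ∃ θ : ℕ → ℕ, Tendsto (fun n => f (a (θ n))) atTop l) : Tendsto f cofinite l := by
  intro s hs
  by_contra hinf
  have hinf : {a | f a ∉ s}.Infinite := hinf
  let e := hinf.natEmbedding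
  obtain ⟨θ, hθ⟩ := hf (fun n => e n) (Subtype.val_injective.comp e.injective)
  obtain ⟨n, hn⟩ := (hθ.eventually_mem hs).exists
  exact (e (θ n)).2 hn

lemma exists_tendsto_smul_cofinite {α : Type*} {m : α → Matrix ι ι ℝ} {A : Matrix ι ι ℝ}
    (hA : A ≠ 0) (hm : ∀ a : ℕ → α, Function.Injective a → ∃ (θ : ℕ → ℕ) (c : ℕ → ℝ),
      Tendsto c atTop (𝓝 0) ∧ Tendsto (fun n => c n • m (a (θ n))) atTop (𝓝 A)) :
    ∃ c : α → ℝ, Tendsto c cofinite (𝓝 0) ∧ Tendsto (fun a => c a • m a) cofinite (𝓝 A) := by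
  obtain ⟨p, q, hpq⟩ : ∃ p q, A p q ≠ 0 := by
    by_contra! h
    exact hA (Matrix.ext h)
  have hlim : Tendsto (fun a => (A p q / m a p q, (A p q / m a p q) • m a)) cofinite
      (𝓝 (0, A)) := tendsto_cofinite_of_subseq fun a ha => by
    obtain ⟨θ, c, hc, hcm⟩ := hm a ha
    have hentry : Tendsto (fun n => c n * m (a (θ n)) p q) atTop (𝓝 (A p q)) :=
      ((continuous_id.matrix_elem p q).tendsto _).comp hcm
    have hratio : Tendsto (fun n => A p q / (c n * m (a (θ n)) p q)) atTop (𝓝 1) :=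
      div_self hpq ▸ tendsto_const_nhds.div hentry hpq
    have hcancel : ∀ᶠ n in atTop, A p q / (c n * m (a (θ n)) p q) * c n = A p q / m (a (θ n)) p q :=
      (hentry.eventually_ne hpq).mono fun n hn => by
        have := left_ne_zero_of_mul hn
        field_simp
    refine ⟨θ, Tendsto.prodMk_nhds ?_ ?_⟩
    · simpa using (hratio.mul hc).congr' hcancel
    · refine Tendsto.congr' (hcancel.mono fun n hn => ?_) (by simpa using hratio.smul hcm)
      rw [smul_smul, hn]
  exact ⟨_, hlim.fst_nhds, hlim.snd_nhds⟩

lemma exists_subseq_tendsto_smul [Finite ι] {A : ℕ → Matrix ι ι ℝ} (hA : ∀ n, A n ≠ 0) :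
    ∃ (θ : ℕ → ℕ) (c : ℕ → ℝ) (T : Matrix ι ι ℝ), StrictMono θ ∧ T ≠ 0 ∧
      Tendsto (fun n => c n • A (θ n)) atTop (𝓝 T) := by
  have := Fintype.ofFinite ι
  let _ : NormedAddCommGroup (Matrix ι ι ℝ) := Matrix.normedAddCommGroup
  let _ : NormedSpace ℝ (Matrix ι ι ℝ) := Matrix.normedSpace
  have hmem (n : ℕ) : ‖A n‖⁻¹ • A n ∈ Metric.sphere (0 : Matrix ι ι ℝ) 1 := by
    rw [mem_sphere_zero_iff_norm, norm_smul, norm_inv, norm_norm,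
      inv_mul_cancel₀ (norm_ne_zero_iff.2 (hA n))]
  obtain ⟨T, hT, θ, hθ, hlim⟩ := (isCompact_sphere (0 : Matrix ι ι ℝ) 1).tendsto_subseq hmem
  exact ⟨θ, _, T, hθ, ne_zero_of_mem_unit_sphere ⟨T, hT⟩, hlim⟩

variable [Fintype ι]

lemma exists_eq_smul_vecMulVec {T : Matrix ι ι ℝ} {v φ η : ι → ℝ} (hη : η ⬝ᵥ v ≠ 0)
    (hcol : ∀ u, T *ᵥ u ∈ Submodule.span ℝ {v}) (hrow : η ᵥ* T ∈ Submodule.span ℝ {φ}) :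
    ∃ s : ℝ, T = s • vecMulVec v φ := by
  classical
  choose ψ hψ using fun j => Submodule.mem_span_singleton.1 (hcol (Pi.single j 1))
  have hT : T = vecMulVec v ψ := by
    ext i j
    simpa [vecMulVec_apply, mul_comm] using (congrFun (hψ j) i).symm
  obtain ⟨t, ht⟩ := Submodule.mem_span_singleton.1 hrow
  rw [hT, vecMul_vecMulVec] at ht
  refine ⟨(η ⬝ᵥ v)⁻¹ * t, ?_⟩
  rw [hT, mul_smul, ← vecMulVec_smul, ht, vecMulVec_smul, inv_smul_smul₀ hη]

variable [DecidableEq ι]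

lemma tendsto_zero_of_tendsto_smul_of_det_eq_one {α : Type*} {l : Filter α}
    {A : α → Matrix ι ι ℝ} (hA : ∀ a, (A a).det = 1) {c : α → ℝ} {T : Matrix ι ι ℝ}
    (hT : T.det = 0) (hlim : Tendsto (fun a => c a • A a) l (𝓝 T)) : Tendsto c l (𝓝 0) := by
  have hcard : Fintype.card ι ≠ 0 := fun h => by
    have := Fintype.card_eq_zero_iff.1 h
    exact one_ne_zero ((Matrix.det_isEmpty (A := T)).symm.trans hT)
  have hdet := ((continuous_id.matrix_det).tendsto T).comp hlim
  simp only [id, hT, Function.comp_def, Matrix.det_smul, hA, mul_one] at hdet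
  rw [tendsto_zero_iff_abs_tendsto_zero] at hdet ⊢
  have hroot := hdet.rpow_const (p := (Fintype.card ι : ℝ)⁻¹) (Or.inr (by positivity))
  rw [Real.zero_rpow (by positivity)] at hroot
  refine hroot.congr fun a => ?_
  simp only [Function.comp_apply, abs_pow]
  exact Real.pow_rpow_inv_natCast (abs_nonneg _) hcard

lemma dotProduct_eq_zero_of_tendsto_smul {G : Type*} [Group G] [Infinite G]
    {m : G →* Matrix ι ι ℝ} {c : G → ℝ} {v φ : ι → ℝ} (hv : v ≠ 0) (hφ : φ ≠ 0)
    (hc : Tendsto c cofinite (𝓝 0))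
    (hm : Tendsto (fun g => c g • m g) cofinite (𝓝 (vecMulVec v φ))) : φ ⬝ᵥ v = 0 := by
  have hinv := (inv_injective (G := G)).tendsto_cofinite
  have hprod : Tendsto (fun g => (c g • m g) * (c g⁻¹ • m g⁻¹)) cofinite (𝓝 0) := by
    have hmul (g : G) : (c g • m g) * (c g⁻¹ • m g⁻¹) = (c g * c g⁻¹) • 1 := by
      rw [smul_mul_smul_comm, ← map_mul, mul_inv_cancel, map_one]
    simpa [hmul] using (hc.mul (hc.comp hinv)).smul_const (1 : Matrix ι ι ℝ)
  have hsq := tendsto_nhds_unique (hm.mul (hm.comp hinv)) hprod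
  rw [vecMulVec_mul_vecMulVec, vecMulVec_smul, smul_eq_zero] at hsq
  exact hsq.resolve_right (vecMulVec_ne_zero hv hφ)

lemma exists_units_mulVec_eq_single {K : Type*} [Field K] {p q : ι} (hpq : p ≠ q) {v φ : ι → K}
    (hv : v ≠ 0) (hφ : φ ≠ 0) (h : φ ⬝ᵥ v = 0) :
    ∃ P : (Matrix ι ι K)ˣ, (P : Matrix ι ι K) *ᵥ v = Pi.single p 1 ∧
      φ ᵥ* (↑P⁻¹ : Matrix ι ι K) = Pi.single q 1 := by
  obtain ⟨n, b, i, j, hij, hi, hj⟩ := exists_basis_of_pairing_eq_zero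
    (f := dotProductEquiv K ι φ) h ((dotProductEquiv K ι).map_ne_zero_iff.2 hφ) hv
  let e := Pi.basisFun K ι
  obtain ⟨σ, hσi, hσj⟩ := MulAction.is_two_pretransitive_iff.1
    (Equiv.Perm.isMultiplyPretransitive ι 2) ((b.indexEquiv e).injective.ne hij) hpq
  let b' := b.reindex ((b.indexEquiv e).trans σ)
  have hv' : b'.repr v = Finsupp.single p 1 := by
    rw [← hσi]
    simp [b', hi]
  have hφ' (k : ι) : φ ⬝ᵥ b' k = Pi.single (M := fun _ => K) q 1 k := by
    have hcoord : dotProductEquiv K ι φ = b'.coord q := by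
      ext
      simp [hj, b', ← hσj, Module.Basis.repr_reindex_apply, -Module.Basis.repr_reindex]
    refine (LinearMap.congr_fun hcoord (b' k)).trans ?_
    simp [Pi.single_apply, Finsupp.single_apply]
  refine ⟨⟨b'.toMatrix e, e.toMatrix b', b'.toMatrix_mul_toMatrix_flip e,
    e.toMatrix_mul_toMatrix_flip b'⟩, ?_, funext hφ'⟩
  exact (e.toMatrix_mulVec_repr b' v).trans (by rw [hv', Finsupp.single_eq_pi_single])

lemma isCornerDominated_of_tendsto_smul {G : Type*} [Group G] {p q : ι}
    {m : G →* Matrix ι ι ℝ}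
    (hcol : ∀ g, m g *ᵥ Pi.single p 1 ∈ Submodule.span ℝ {Pi.single p (1 : ℝ)})
    (hrow : ∀ g, Pi.single q 1 ᵥ* m g ∈ Submodule.span ℝ {Pi.single q (1 : ℝ)})
    {c : G → ℝ} (hc : Tendsto c cofinite (𝓝 0))
    (hm : Tendsto (fun g => c g • m g) cofinite (𝓝 (Matrix.single p q 1))) :
    IsCornerDominated p q m := by
  have hentry : Tendsto (fun g => c g * m g p q) cofinite (𝓝 1) := by
    simpa [Function.comp_def] using ((continuous_id.matrix_elem p q).tendsto _).comp hm
  refine ⟨fun g i hi => ?_, fun g j hj => ?_, ?_, ?_⟩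
  · obtain ⟨l, hl⟩ := Submodule.mem_span_singleton.1 (hcol g)
    simpa [hi] using (congrFun hl i).symm
  · obtain ⟨l, hl⟩ := Submodule.mem_span_singleton.1 (hrow g)
    simpa [hj] using (congrFun hl j).symm
  · have hlim := (hentry.inv₀ one_ne_zero).smul hm
    rw [inv_one, one_smul] at hlim
    refine hlim.congr' ((hentry.eventually_ne one_ne_zero).mono fun g hg => ?_)
    have := left_ne_zero_of_mul hg
    rw [smul_smul, mul_inv, mul_right_comm, inv_mul_cancel₀ this, one_mul]
  · have hc_ne : Tendsto c cofinite (𝓝[≠] 0) := tendsto_nhdsWithin_iff.2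
      ⟨hc, (hentry.eventually_ne one_ne_zero).mono fun g hg => left_ne_zero_of_mul hg⟩
    have hinv := tendsto_norm_inv_nhdsNE_zero_atTop.comp hc_ne
    refine (hinv.atTop_mul_pos one_pos (by simpa using hentry.abs)).congr'
      ((hentry.eventually_ne one_ne_zero).mono fun g hg => ?_)
    have := abs_ne_zero.2 (left_ne_zero_of_mul hg)
    simp [inv_mul_cancel_left₀ this]

lemma exists_isCornerDominated {G : Type*} [Group G] [Infinite G] {p q : ι} (hpq : p ≠ q)
    {m : G →* Matrix ι ι ℝ} {v φ : ι → ℝ} (hv : v ≠ 0) (hφ : φ ≠ 0)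
    (hcol : ∀ g, m g *ᵥ v ∈ Submodule.span ℝ {v}) (hrow : ∀ g, φ ᵥ* m g ∈ Submodule.span ℝ {φ})
    {c : G → ℝ} (hc : Tendsto c cofinite (𝓝 0))
    (hm : Tendsto (fun g => c g • m g) cofinite (𝓝 (vecMulVec v φ))) :
    ∃ m' : G →* Matrix ι ι ℝ, IsCornerDominated p q m' ∧ ∀ g, (m' g).det = (m g).det := by
  obtain ⟨P, hPv, hφP⟩ := exists_units_mulVec_eq_single hpq hv hφ
    (dotProduct_eq_zero_of_tendsto_smul hv hφ hc hm)
  have hPv' : (↑P⁻¹ : Matrix ι ι ℝ) *ᵥ Pi.single p 1 = v := by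
    rw [← hPv, mulVec_mulVec, Units.inv_mul, one_mulVec]
  have hφP' : Pi.single q 1 ᵥ* (P : Matrix ι ι ℝ) = φ := by
    rw [← hφP, vecMul_vecMul, Units.inv_mul, vecMul_one]
  let m' : G →* Matrix ι ι ℝ :=
    (MulDistribMulAction.toMonoidHom _ (ConjAct.toConjAct P)).comp m
  have hm' (g : G) : m' g = P * m g * (↑P⁻¹ : Matrix ι ι ℝ) := rfl
  refine ⟨m', isCornerDominated_of_tendsto_smul (fun g => ?_) (fun g => ?_) hc ?_,
    fun g => det_units_conj P (m g)⟩
  · obtain ⟨l, hl⟩ := Submodule.mem_span_singleton.1 (hcol g)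
    refine Submodule.mem_span_singleton.2 ⟨l, ?_⟩
    rw [hm', ← mulVec_mulVec, hPv', ← mulVec_mulVec, ← hl, mulVec_smul, hPv]
  · obtain ⟨l, hl⟩ := Submodule.mem_span_singleton.1 (hrow g)
    refine Submodule.mem_span_singleton.2 ⟨l, ?_⟩
    rw [hm', ← vecMul_vecMul, ← vecMul_vecMul, hφP', ← hl, smul_vecMul, hφP]
  · have hlim := (hm.const_mul (P : Matrix ι ι ℝ)).mul_const (↑P⁻¹ : Matrix ι ι ℝ)
    rw [mul_vecMulVec, vecMulVec_mul, hPv, hφP, ← single_eq_single_vecMulVec_single] at hlim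
    simpa [hm'] using hlim

end MatrixLimits

section ProjectiveLimits

-- The quotient `‖w mod v‖ / ‖w‖` is a continuous function on the projective space.
lemma mem_span_singleton_of_tendsto_mk {𝕜 E : Type*} [NontriviallyNormedField 𝕜] [CompleteSpace 𝕜]
    [NormedAddCommGroup E] [NormedSpace 𝕜 E] {α : Type*} {l : Filter α} [NeBot l] {w : α → E}
    (hw : ∀ a, w a ≠ 0) {v : E} (hv : v ≠ 0)
    (h : Tendsto (fun a => Projectivization.mk 𝕜 (w a) (hw a)) l (𝓝 (Projectivization.mk 𝕜 v hv)))
    {c : α → 𝕜} {w' : E} (hc : Tendsto (fun a => c a • w a) l (𝓝 w')) :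
    w' ∈ Submodule.span 𝕜 {v} := by
  let π := (Submodule.span 𝕜 {v}).mkQ
  have hclosed : IsClosed (Submodule.span 𝕜 {v} : Set E) := Submodule.closed_of_finiteDimensional _
  have hπ : Continuous π := continuous_quot_mk
  have hhom (w₁ w₂ : {w : E // w ≠ 0}) (t : 𝕜) (ht : (w₁ : E) = t • (w₂ : E)) :
      ‖π w₁‖ / ‖(w₁ : E)‖ = ‖π w₂‖ / ‖(w₂ : E)‖ := by
    have ht0 : t ≠ 0 := by
      rintro rfl
      exact w₁.2 (by simpa using ht)
    rw [ht, map_smul, norm_smul, norm_smul, mul_div_mul_left _ _ (norm_ne_zero_iff.2 ht0)]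
  have hcont : Continuous (Projectivization.lift (fun w : {w : E // w ≠ 0} => ‖π w‖ / ‖(w : E)‖)
      hhom) := continuous_coinduced_dom.2 <|
    ((hπ.comp continuous_subtype_val).norm).div continuous_subtype_val.norm
      fun w => norm_ne_zero_iff.2 w.2
  have hratio : Tendsto (fun a => ‖π (w a)‖ / ‖w a‖) l (𝓝 0) := by
    have hv0 : ‖π v‖ / ‖v‖ = 0 := by
      have hmem := Submodule.mem_span_singleton_self (R := 𝕜) v
      rw [show π v = 0 from (Submodule.Quotient.mk_eq_zero _).2 hmem, norm_zero, zero_div]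
    exact hv0 ▸ (hcont.tendsto _).comp h
  have hπw : Tendsto (fun a => ‖π (c a • w a)‖) l (𝓝 0) := by
    refine (zero_mul ‖w'‖ ▸ hratio.mul hc.norm).congr fun a => ?_
    have := norm_ne_zero_iff.2 (hw a)
    rw [map_smul, norm_smul, norm_smul]
    field_simp
  have hzero := tendsto_nhds_unique ((hπ.tendsto w').comp hc).norm hπw
  exact (Submodule.Quotient.mk_eq_zero _).1 (norm_eq_zero.1 hzero)

variable {ι : Type*} [Fintype ι] [DecidableEq ι]

lemma mulVec_ne_zero_of_det_eq_one {R : Type*} [CommRing R] [IsDomain R] {A : Matrix ι ι R}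
    (hA : A.det = 1) {u : ι → R} (hu : u ≠ 0) : A *ᵥ u ≠ 0 := fun h =>
  one_ne_zero (hA.symm.trans (exists_mulVec_eq_zero_iff.1 ⟨u, hu, h⟩))

lemma vecMul_ne_zero_of_det_eq_one {R : Type*} [CommRing R] [IsDomain R] {A : Matrix ι ι R}
    (hA : A.det = 1) {u : ι → R} (hu : u ≠ 0) : u ᵥ* A ≠ 0 := fun h =>
  one_ne_zero (hA.symm.trans (exists_vecMul_eq_zero_iff.1 ⟨u, hu, h⟩))

lemma exists_tendsto_smul_vecMulVec [Nontrivial ι] {A : ℕ → Matrix ι ι ℝ}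
    (hA : ∀ n, (A n).det = 1) {v φ η : ι → ℝ} (hv : v ≠ 0) (hφ : φ ≠ 0) (hη : η ≠ 0)
    (hηv : η ⬝ᵥ v ≠ 0)
    (hcol : ∀ u (hu : u ≠ 0), φ ⬝ᵥ u ≠ 0 → Tendsto
      (fun n => Projectivization.mk ℝ (A n *ᵥ u) (mulVec_ne_zero_of_det_eq_one (hA n) hu)) atTop
      (𝓝 (Projectivization.mk ℝ v hv)))
    (hrow : Tendsto
      (fun n => Projectivization.mk ℝ (η ᵥ* A n) (vecMul_ne_zero_of_det_eq_one (hA n) hη)) atTop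
      (𝓝 (Projectivization.mk ℝ φ hφ))) :
    ∃ (θ : ℕ → ℕ) (c : ℕ → ℝ), Tendsto c atTop (𝓝 0) ∧
      Tendsto (fun n => c n • A (θ n)) atTop (𝓝 (vecMulVec v φ)) := by
  obtain ⟨θ, c, T, hθ, hT, hlim⟩ := exists_subseq_tendsto_smul (A := A) fun n h0 => by
    simpa [h0] using hA n
  have hTcol_of_ne (u : ι → ℝ) (hu : φ ⬝ᵥ u ≠ 0) : T *ᵥ u ∈ Submodule.span ℝ {v} := by
    have hu0 : u ≠ 0 := fun h => hu (by rw [h, dotProduct_zero])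
    refine mem_span_singleton_of_tendsto_mk _ hv ((hcol u hu0 hu).comp hθ.tendsto_atTop) (c := c) ?_
    simpa only [smul_mulVec, Function.comp_def, id] using
      ((continuous_id.matrix_mulVec continuous_const).tendsto T).comp hlim
  have hTcol (u : ι → ℝ) : T *ᵥ u ∈ Submodule.span ℝ {v} := by
    obtain ⟨u₀, hu₀⟩ : ∃ u₀, φ ⬝ᵥ u₀ ≠ 0 := by
      by_contra! h
      exact hφ (dotProduct_eq_zero φ h)
    by_cases hu : φ ⬝ᵥ u = 0
    · rw [← add_sub_cancel_right u u₀, mulVec_sub]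
      exact sub_mem (hTcol_of_ne _ (by rwa [dotProduct_add, hu, zero_add])) (hTcol_of_ne _ hu₀)
    · exact hTcol_of_ne u hu
  have hTrow : η ᵥ* T ∈ Submodule.span ℝ {φ} := by
    refine mem_span_singleton_of_tendsto_mk _ hφ (hrow.comp hθ.tendsto_atTop) (c := c) ?_
    simpa only [vecMul_smul, Function.comp_def, id] using
      ((continuous_const.matrix_vecMul continuous_id).tendsto T).comp hlim
  obtain ⟨s, rfl⟩ := exists_eq_smul_vecMulVec hηv hTcol hTrow
  have hs : s ≠ 0 := left_ne_zero_of_smul hT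
  have hdet : (s • vecMulVec v φ).det = 0 := by rw [det_smul, det_vecMulVec, mul_zero]
  have hc := tendsto_zero_of_tendsto_smul_of_det_eq_one (fun n => hA (θ n)) hdet hlim
  refine ⟨θ, fun n => s⁻¹ * c n, by simpa using hc.const_mul s⁻¹, ?_⟩
  simpa [mul_smul, hs] using hlim.const_smul s⁻¹

end ProjectiveLimits

namespace IsRelOneAnosov

variable {Γ M : Type} [Group Γ] [TopologicalSpace M] [MulAction Γ M] {d : ℕ}
  {ρ : Γ →* SpecialLinearGroup (Fin d) ℝ} {ξ ξs : M → Projectivization ℝ (Fin d → ℝ)}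
  {x y : M} {v φ : Fin d → ℝ}

lemma mulVec_mem_span (hA : IsRelOneAnosov ρ ξ ξs) (hv : v ≠ 0)
    (hξ : ξ x = Projectivization.mk ℝ v hv) {γ : Γ} (hγ : γ • x = x) :
    (ρ γ : Matrix (Fin d) (Fin d) ℝ) *ᵥ v ∈ Submodule.span ℝ {v} := by
  have h := hA.equivariant_fst γ x v hv (mulVec_ne_zero_of_det_eq_one (ρ γ).2 hv) hξ
  rw [hγ, hξ, eq_comm, Projectivization.mk_eq_mk_iff'] at h
  exact Submodule.mem_span_singleton.2 h

lemma snd_inv_smul (hA : IsRelOneAnosov ρ ξ ξs) (hφ : φ ≠ 0)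
    (hξs : ξs y = Projectivization.mk ℝ φ hφ) (γ : Γ) :
    ξs (γ⁻¹ • y) = Projectivization.mk ℝ (φ ᵥ* (ρ γ : Matrix (Fin d) (Fin d) ℝ))
      (vecMul_ne_zero_of_det_eq_one (ρ γ).2 hφ) := by
  have hinv : (ρ γ⁻¹)⁻¹ = ρ γ := by rw [map_inv, inv_inv]
  simpa only [hinv] using hA.equivariant_snd γ⁻¹ y φ hφ
    (vecMul_ne_zero_of_det_eq_one (ρ γ⁻¹)⁻¹.2 hφ) hξs

lemma vecMul_mem_span (hA : IsRelOneAnosov ρ ξ ξs) (hφ : φ ≠ 0)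
    (hξs : ξs x = Projectivization.mk ℝ φ hφ) {γ : Γ} (hγ : γ • x = x) :
    φ ᵥ* (ρ γ : Matrix (Fin d) (Fin d) ℝ) ∈ Submodule.span ℝ {φ} := by
  have h := hA.snd_inv_smul hφ hξs γ
  rw [inv_smul_eq_iff.2 hγ.symm, hξs, eq_comm, Projectivization.mk_eq_mk_iff'] at h
  exact Submodule.mem_span_singleton.2 h

lemma exists_tendsto_smul_vecMulVec [Nontrivial (Fin d)] [CompactSpace M] [T2Space M]
    (hA : IsRelOneAnosov ρ ξ ξs) [NeBot (𝓝[≠] x)] (hv : v ≠ 0) (hφ : φ ≠ 0)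
    (hξ : ξ x = Projectivization.mk ℝ v hv) (hξs : ξs x = Projectivization.mk ℝ φ hφ)
    {g : ℕ → Γ} (hg : ConvLocUnif g x x) :
    ∃ (θ : ℕ → ℕ) (c : ℕ → ℝ), Tendsto c atTop (𝓝 0) ∧
      Tendsto (fun n => c n • (ρ (g (θ n)) : Matrix (Fin d) (Fin d) ℝ)) atTop
        (𝓝 (vecMulVec v φ)) := by
  obtain ⟨y, hyx⟩ : ∃ y, y ≠ x := NeBot.nonempty_of_mem ‹_› (self_mem_nhdsWithin (s := {x}ᶜ))
  obtain ⟨η, hη, hξsy⟩ : ∃ (η : Fin d → ℝ) (hη : η ≠ 0), ξs y = Projectivization.mk ℝ η hη :=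
    ⟨(ξs y).rep, (ξs y).rep_nonzero, (Projectivization.mk_rep _).symm⟩
  refine _root_.exists_tendsto_smul_vecMulVec (fun n => (ρ (g n)).2) hv hφ hη
    (hA.transverse x y (Ne.symm hyx) v η hv hη hξ hξsy) (fun u hu hφu => ?_) ?_
  · rw [← hξ]
    exact hA.dynamics g x x (fun z hz => hg.tendsto hz) (fun z hz => hg.inv.tendsto hz) φ hφ hξs u
      (fun n => mulVec_ne_zero_of_det_eq_one (ρ (g n)).2 hu) hφu
  · rw [← hξs]
    exact ((hA.continuous_snd.tendsto x).comp (hg.inv.tendsto hyx)).congr fun n =>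
      hA.snd_inv_smul hη hξsy (g n)

end IsRelOneAnosov

lemma VirtuallyFreeAbelian.exists_mulEquiv_int_or_int_prod {G : Type*} [Group G] [Infinite G]
    (h : VirtuallyFreeAbelian 2 G) : ∃ H : Subgroup G, H.FiniteIndex ∧
      (Nonempty (H ≃* Multiplicative ℤ) ∨ Nonempty (H ≃* Multiplicative (ℤ × ℤ))) := by
  obtain ⟨k, hk, H, hH, ⟨e⟩⟩ := h
  refine ⟨H, hH, ?_⟩
  interval_cases k
  · have := infinite_subgroup_of_finiteIndex H
    exact absurd (Finite.of_equiv _ e.symm.toEquiv) (not_finite_iff_infinite.2 this)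
  · exact Or.inl ⟨e.trans (AddEquiv.toMultiplicative (AddEquiv.piUnique fun _ : Fin 1 => ℤ))⟩
  · exact Or.inr ⟨e.trans (AddEquiv.toMultiplicative
      (LinearEquiv.finTwoArrow ℤ ℤ).toAddEquiv)⟩

namespace IsRelOneAnosov

variable {Γ M : Type} [Group Γ] [TopologicalSpace M] [MulAction Γ M] {d : ℕ}
  {ρ : Γ →* SpecialLinearGroup (Fin d) ℝ} {ξ ξs : M → Projectivization ℝ (Fin d → ℝ)}

lemma exists_isCornerDominated [CompactSpace M] [T2Space M] (hA : IsRelOneAnosov ρ ξ ξs)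
    (hconv : IsConvergenceAction Γ M) {x : M} [NeBot (𝓝[≠] x)]
    [Infinite (MulAction.stabilizer Γ x)]
    (hfix : ∀ y : M, (∀ γ ∈ MulAction.stabilizer Γ x, γ • y = y) → y = x)
    {p q : Fin d} (hpq : p ≠ q) :
    ∃ m : MulAction.stabilizer Γ x →* Matrix (Fin d) (Fin d) ℝ,
      IsCornerDominated p q m ∧ ∀ γ, (m γ).det = 1 := by
  have : Nontrivial (Fin d) := ⟨p, q, hpq⟩
  obtain ⟨hv, hξ⟩ := And.intro (ξ x).rep_nonzero (Projectivization.mk_rep (ξ x)).symm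
  obtain ⟨hφ, hξs⟩ := And.intro (ξs x).rep_nonzero (Projectivization.mk_rep (ξs x)).symm
  let m : MulAction.stabilizer Γ x →* Matrix (Fin d) (Fin d) ℝ :=
    (SpecialLinearGroup.coeMonoidHom.comp ρ).comp (MulAction.stabilizer Γ x).subtype
  obtain ⟨c, hc, hlim⟩ := exists_tendsto_smul_cofinite (m := m) (vecMulVec_ne_zero hv hφ)
    fun g hg => by
      obtain ⟨ψ, -, hgψ⟩ := hconv.exists_subseq_convLocUnif_self hfix (fun n => (g n).2)
        (Subtype.val_injective.comp hg)
      obtain ⟨θ, c, hc, hlim⟩ := hA.exists_tendsto_smul_vecMulVec hv hφ hξ hξs hgψ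
      exact ⟨ψ ∘ θ, c, hc, hlim⟩
  obtain ⟨m', hm', hdet⟩ := _root_.exists_isCornerDominated hpq hv hφ
    (fun γ => hA.mulVec_mem_span hv hξ γ.2) (fun γ => hA.vecMul_mem_span hφ hξs γ.2) hc hlim
  exact ⟨m', hm', fun γ => (hdet γ).trans (ρ γ).2⟩

end IsRelOneAnosov

theorem rel_anosov_SL4_peripherals_virtually_abelian_general
    {Γ M : Type} [Group Γ] [TopologicalSpace M] [MulAction Γ M] [CompactSpace M] [T2Space M]
    (hconv : IsConvergenceAction Γ M)
    {ρ : Γ →* Matrix.SpecialLinearGroup (Fin 4) ℝ} {ξ ξs : M → Projectivization ℝ (Fin 4 → ℝ)}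
    (hAnosov : IsRelOneAnosov ρ ξ ξs) {x : M} [NeBot (𝓝[≠] x)]
    [Infinite (MulAction.stabilizer Γ x)]
    (hfix : ∀ y : M, (∀ γ ∈ MulAction.stabilizer Γ x, γ • y = y) → y = x) :
    ∃ H : Subgroup (MulAction.stabilizer Γ x), H.FiniteIndex ∧
      (Nonempty (H ≃* Multiplicative ℤ) ∨ Nonempty (H ≃* Multiplicative (ℤ × ℤ))) := by
  obtain ⟨m, hm, hdet⟩ :=
    hAnosov.exists_isCornerDominated hconv hfix (p := 0) (q := 3) (by decide)
  exact (hm.virtuallyFreeAbelian hdet).exists_mulEquiv_int_or_int_prod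

/-- **Theorem (peripherals of relatively 1-Anosov subgroups of SL₄(ℝ)).**
If `(Γ, M)` is a boundary pair with `M` connected and not homeomorphic to the circle, and
`ρ : Γ → SL₄(ℝ)` is relatively 1-Anosov, then the stabilizer of every bounded parabolic point
of `M` is virtually `ℤ` or `ℤ × ℤ`. -/
theorem rel_anosov_SL4_peripherals_virtually_abelian
    {Γ M : Type} [Group Γ] [TopologicalSpace M] [MulAction Γ M]
    (hBP : IsBoundaryPair Γ M)
    (hconn : ConnectedSpace M) (hnotcircle : IsEmpty (M ≃ₜ Circle1))
    (ρ : Γ →* Matrix.SpecialLinearGroup (Fin 4) ℝ)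
    (ξ ξs : M → Projectivization ℝ (Fin 4 → ℝ))
    (hAnosov : IsRelOneAnosov ρ ξ ξs) :
    ∀ x : M, IsBoundedParabolicPoint Γ x →
      ∃ H : Subgroup (MulAction.stabilizer Γ x), H.FiniteIndex ∧
        (Nonempty (H ≃* Multiplicative ℤ) ∨ Nonempty (H ≃* Multiplicative (ℤ × ℤ))) := by
  intro x hx
  have := hBP.compact; have := hBP.metrizable; have := hBP.perfect x; have := hx.1
  exact rel_anosov_SL4_peripherals_virtually_abelian_general hBP.conv hAnosov hx.2.1
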